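/- Let k ≥ 2 and let A be a subset of the prime numbers whose natural density in the primes exists and equals θ ∈ (0,1]. Then the limit as N → ∞ of the ratio (∑_{n ≥ 1 : every prime factor of n is ≤ N and lies in A} 1/n) / (∑_{k-free n with 1 ≤ n ≤ N : every prime factor of n lies in A} 1/( n_{(k−1)-free} · φ(n_{(k−1)-power}) )) equals e^{γθ} · Γ(θ+1). -/

import Mathlib

open Filter
open scoped Classical

/-- `n` is `k`-free: no `k`-th power of a prime divides `n`. -/
def KFree (k n : ℕ) : Prop := ∀ p : ℕ, p.Prime → ¬ p ^ k ∣ n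

/-- The `m`-free part of `n`: each prime `p` appearing with exponent `e` in `n` contributes
`p ^ (e % m)`.  In particular the `1`-free part of any `n` is `1`. -/
def freePart (m n : ℕ) : ℕ := n.factorization.prod fun p e => p ^ (e % m)

/-- The `m`-power part of `n`: each prime `p` appearing with exponent `e` in `n` contributes
`p ^ (m * (e / m))`, so the result is a perfect `m`-th power, and
`n = freePart m n * powerPart m n`.  In particular the `1`-power part of `n` is `n` itself. -/
def powerPart (m n : ℕ) : ℕ := n.factorization.prod fun p e => p ^ (m * (e / m))

/-- The sum of `1/n` over positive integers `n` all of whose prime factors lie in the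
set described by the predicate `P`. -/
noncomputable def harmSum (P : ℕ → Prop) : ℝ :=
  ∑' n : {n : ℕ // 0 < n ∧ ∀ p : ℕ, p.Prime → p ∣ n → P p}, (1 : ℝ) / ((n : ℕ) : ℝ)

/-- Summation by parts: a bound for weighted sums with decreasing weights. -/
theorem abs_sum_Ioc_mul_le_of_antitoneOn {b g : ℕ → ℝ} {m : ℕ} {C : ℝ}
    (hg : AntitoneOn g (Set.Ioi m)) (hg0 : ∀ n, m < n → 0 ≤ g n)
    (hb : ∀ n, m ≤ n → |∑ i ∈ Finset.Ioc m n, b i| ≤ C) (n : ℕ) (hn : m ≤ n) :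
    |∑ i ∈ Finset.Ioc m n, b i * g i| ≤ C * g (m + 1) := by
  have hC : 0 ≤ C := (abs_nonneg _).trans (hb m le_rfl)
  have key : ∀ n, m ≤ n →
      |∑ i ∈ Finset.Ioc m n, b i * g i - (∑ i ∈ Finset.Ioc m n, b i) * g (n + 1)|
        ≤ C * (g (m + 1) - g (n + 1)) := by
    intro n hn
    induction n, hn using Nat.le_induction with
    | base => simp
    | succ n hn ih =>
      rw [Finset.sum_Ioc_succ_top hn, Finset.sum_Ioc_succ_top hn]
      have h1 : g (n + 1 + 1) ≤ g (n + 1) :=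
        hg (Set.mem_Ioi.2 (by lia)) (Set.mem_Ioi.2 (by lia)) (by lia)
      have h2 := hb (n + 1) (by lia)
      rw [Finset.sum_Ioc_succ_top hn] at h2
      have h3 : |(∑ i ∈ Finset.Ioc m n, b i + b (n + 1)) * (g (n + 1) - g (n + 1 + 1))|
          ≤ C * (g (n + 1) - g (n + 1 + 1)) := by
        rw [abs_mul, abs_of_nonneg (sub_nonneg.2 h1)]
        gcongr
      rw [abs_le] at ih h3 ⊢
      constructor <;> nlinarith [ih.1, ih.2, h3.1, h3.2]
  have h1 := key n hn
  have h2 : |(∑ i ∈ Finset.Ioc m n, b i) * g (n + 1)| ≤ C * g (n + 1) := by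
    rw [abs_mul, abs_of_nonneg (hg0 _ (by lia))]
    exact mul_le_mul_of_nonneg_right (hb n hn) (hg0 _ (by lia))
  rw [abs_le] at *
  constructor <;> linarith [h1.1, h1.2, h2.1, h2.2]

theorem log_factorial_eq_sum_primes (n : ℕ) :
    Real.log (n.factorial) = ∑ p ∈ Finset.Ioc 0 n with p.Prime,
      (n.factorial.factorization p : ℝ) * Real.log p := by
  conv_lhs => rw [← Nat.prod_factorization_pow_eq_self n.factorial_ne_zero]
  rw [Nat.prod_factorization_eq_prod_primeFactors]
  rw [Nat.cast_prod, Real.log_prod (fun p hp => by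
    have := (Nat.prime_of_mem_primeFactors hp).pos
    positivity)]
  have : n.factorial.primeFactors = Finset.filter Nat.Prime (Finset.Ioc 0 n) := by
    ext p
    simp only [Nat.mem_primeFactors, Finset.mem_filter, Finset.mem_Ioc]
    constructor
    · rintro ⟨hp, hd, -⟩
      exact ⟨⟨hp.pos, (hp.dvd_factorial).1 hd⟩, hp⟩
    · rintro ⟨⟨_, h⟩, hp⟩
      exact ⟨hp, (hp.dvd_factorial).2 h, n.factorial_ne_zero⟩
  rw [this]
  refine Finset.sum_congr rfl fun p _ => ?_
  push_cast
  rw [Real.log_pow]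

theorem summable_log_div_mul_sub_one :
    Summable fun p : ℕ => Real.log p / (p * (p - 1) : ℝ) := by
  have h : Summable fun n : ℕ => 4 * ((n : ℝ) ^ (3 / 2 : ℝ))⁻¹ :=
    (Real.summable_nat_rpow_inv.2 (by norm_num)).mul_left 4
  refine Summable.of_nonneg_of_le (fun n => ?_) (fun n => ?_) h
  · rcases n.eq_zero_or_pos with rfl | hn
    · simp
    have : (1 : ℝ) ≤ n := by exact_mod_cast hn
    have := Real.log_nonneg this
    apply div_nonneg this (mul_nonneg (by linarith) (by linarith))
  · rcases Nat.lt_or_ge n 2 with hn | hn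
    · interval_cases n <;> simp
    have h2 : (2 : ℝ) ≤ n := by exact_mod_cast hn
    have hl := Real.log_le_rpow_div (x := n) (ε := 1 / 2) (by linarith) (by norm_num)
    have hx : (n : ℝ) ^ (3 / 2 : ℝ) * (n : ℝ) ^ (1 / 2 : ℝ) = (n : ℝ) ^ 2 := by
      rw [← Real.rpow_add (by linarith)]
      norm_num
    have hpos : 0 < (n : ℝ) ^ (3 / 2 : ℝ) := by positivity
    have hpos' : 0 < (n : ℝ) ^ (1 / 2 : ℝ) := by positivity
    rw [← div_eq_mul_inv, div_le_div_iff₀ (by nlinarith) hpos]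
    calc Real.log n * (n : ℝ) ^ (3 / 2 : ℝ)
        ≤ ((n : ℝ) ^ (1 / 2 : ℝ) / (1 / 2)) * (n : ℝ) ^ (3 / 2 : ℝ) := by gcongr
      _ = 2 * (n : ℝ) ^ 2 := by rw [← hx]; ring
      _ ≤ 4 * (n * (n - 1)) := by nlinarith

/-- Mertens' first theorem. -/
theorem exists_abs_sum_log_div_sub_log_le :
    ∃ C : ℝ, ∀ n : ℕ, 0 < n →
      |∑ p ∈ Finset.Ioc 0 n with p.Prime, Real.log p / p - Real.log n| ≤ C := by
  refine ⟨Real.log 4 + 1 + ∑' p : ℕ, Real.log p / (p * (p - 1) : ℝ), fun n hn => ?_⟩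
  set K := ∑' p : ℕ, Real.log p / (p * (p - 1) : ℝ) with hK
  have hn' : (0 : ℝ) < n := by exact_mod_cast hn
  have hnn : ∀ p : ℕ, 0 ≤ Real.log p / (p * (p - 1) : ℝ) := by
    intro p
    rcases p.eq_zero_or_pos with rfl | hp
    · simp
    have h1 : (1 : ℝ) ≤ p := by exact_mod_cast hp
    exact div_nonneg (Real.log_nonneg h1) (mul_nonneg (by linarith) (by linarith))
  have hK0 : 0 ≤ K := tsum_nonneg hnn
  have hKle : ∑ p ∈ Finset.Ioc 0 n with p.Prime, Real.log p / (p * (p - 1) : ℝ) ≤ K :=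
    summable_log_div_mul_sub_one.sum_le_tsum _ (fun p _ => hnn p)
  have hfac := log_factorial_eq_sum_primes n
  have hup : Real.log n.factorial ≤ n * Real.log n := by
    rw [← Real.log_pow]
    apply Real.log_le_log (by exact_mod_cast n.factorial_pos)
    exact_mod_cast n.factorial_le_pow
  have hlow : n * Real.log n - n ≤ Real.log n.factorial := by
    have h := Stirling.le_log_factorial_stirling hn.ne'
    have h1 : 0 ≤ Real.log n := Real.log_natCast_nonneg n
    have h2 : 0 ≤ Real.log (2 * Real.pi) := Real.log_nonneg (by nlinarith [Real.pi_gt_three])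
    linarith
  have htheta := Chebyshev.theta_le_log4_mul_x hn'.le
  rw [Chebyshev.theta, Nat.floor_natCast] at htheta
  have h1 : ∑ p ∈ Finset.Ioc 0 n with p.Prime, (n.factorial.factorization p : ℝ) * Real.log p
      ≤ n * ∑ p ∈ Finset.Ioc 0 n with p.Prime, (Real.log p / p + Real.log p / (p * (p - 1))) := by
    rw [Finset.mul_sum]
    refine Finset.sum_le_sum fun p hp => ?_
    have hp := (Finset.mem_filter.1 hp).2
    have := Fact.mk hp
    have h2 : (2 : ℝ) ≤ p := by exact_mod_cast hp.two_le
    have hle : (p - 1) * padicValNat p n.factorial ≤ n := by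
      rw [sub_one_mul_padicValNat_factorial]; lia
    have hle' : ((p : ℝ) - 1) * (n.factorial.factorization p : ℝ) ≤ n := by
      rw [Nat.factorization_def _ hp]
      have : ((p - 1 : ℕ) : ℝ) = (p : ℝ) - 1 := by
        rw [Nat.cast_sub hp.one_le]; simp
      rw [← this]
      exact_mod_cast hle
    have hl : 0 ≤ Real.log p := Real.log_natCast_nonneg p
    have e : (n : ℝ) * (Real.log p / p + Real.log p / (p * (p - 1))) =
        n / ((p : ℝ) - 1) * Real.log p := by
      have : (p : ℝ) - 1 ≠ 0 := by linarith
      field_simp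
      ring
    rw [e]
    gcongr
    rw [le_div_iff₀ (by linarith)]
    linarith
  have h2 : n * ∑ p ∈ Finset.Ioc 0 n with p.Prime, Real.log p / p -
      ∑ p ∈ Finset.Ioc 0 n with p.Prime, Real.log p ≤
      ∑ p ∈ Finset.Ioc 0 n with p.Prime, (n.factorial.factorization p : ℝ) * Real.log p := by
    rw [Finset.mul_sum, ← Finset.sum_sub_distrib]
    refine Finset.sum_le_sum fun p hp => ?_
    have hp := (Finset.mem_filter.1 hp).2
    have hl : 0 ≤ Real.log p := Real.log_natCast_nonneg p
    have hge : n / p ≤ n.factorial.factorization p := by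
      rw [Nat.factorization_factorial hp (Nat.lt_succ_self _)]
      by_cases hpn : p ≤ n
      · have : 0 < Nat.log p n := Nat.log_pos hp.one_lt hpn
        refine le_trans (by simp) (Finset.single_le_sum (f := fun i => n / p ^ i)
          (fun _ _ => Nat.zero_le _) (Finset.mem_Ico.2 ⟨le_rfl, Nat.succ_lt_succ this⟩))
      · rw [Nat.div_eq_of_lt (by lia)]; exact Nat.zero_le _
    have hge' : (n : ℝ) / p - 1 ≤ n.factorial.factorization p := by
      have h3 : (n : ℝ) / p < (n / p : ℕ) + 1 := by
        rw [div_lt_iff₀ (by exact_mod_cast hp.pos)]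
        have := Nat.lt_mul_div_succ n hp.pos
        have h4 : n < (n / p + 1) * p := by rw [mul_comm]; exact this
        exact_mod_cast h4
      have : ((n / p : ℕ) : ℝ) ≤ n.factorial.factorization p := by exact_mod_cast hge
      linarith
    calc (n : ℝ) * (Real.log p / p) - Real.log p = ((n : ℝ) / p - 1) * Real.log p := by ring
      _ ≤ _ := by gcongr
  rw [← hfac] at h1 h2
  rw [Finset.sum_add_distrib] at h1
  set S := ∑ p ∈ Finset.Ioc 0 n with p.Prime, Real.log p / p
  have hS1 : n * (Real.log n - 1 - K) ≤ n * S := by nlinarith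
  have hS2 : n * S ≤ n * (Real.log n + Real.log 4) := by nlinarith
  have hS1 := le_of_mul_le_mul_left hS1 hn'
  have hS2 := le_of_mul_le_mul_left hS2 hn'
  have : 0 ≤ Real.log 4 := Real.log_nonneg (by norm_num)
  rw [abs_le]
  constructor <;> linarith

theorem loglog_sub_bounds {i : ℕ} (hi : 2 ≤ i) :
    1 / ((i + 1 : ℝ) * Real.log (i + 1)) ≤ Real.log (Real.log (i + 1)) - Real.log (Real.log i) ∧
    Real.log (Real.log (i + 1)) - Real.log (Real.log i) ≤ 1 / (i * Real.log i) := by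
  have h2 : (2 : ℝ) ≤ i := by exact_mod_cast hi
  have hl : 0 < Real.log i := Real.log_pos (by linarith)
  have hl' : 0 < Real.log (i + 1) := Real.log_pos (by linarith)
  have e : Real.log (i + 1) - Real.log i = Real.log ((i + 1) / i) := by
    rw [Real.log_div (by linarith) (by linarith)]
  have hlow : 1 / (i + 1 : ℝ) ≤ Real.log (i + 1) - Real.log i := by
    have h := Real.one_sub_inv_le_log_of_pos (x := (i + 1 : ℝ) / i) (by positivity)
    rw [← e] at h
    refine le_trans (le_of_eq ?_) h
    field_simp
    ring
  have hup : Real.log (i + 1) - Real.log i ≤ 1 / i := by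
    have h := Real.log_le_sub_one_of_pos (x := (i + 1 : ℝ) / i) (by positivity)
    rw [← e] at h
    refine le_trans h (le_of_eq ?_)
    field_simp
    ring
  rw [← Real.log_div hl'.ne' hl.ne']
  constructor
  · refine le_trans ?_ (Real.one_sub_inv_le_log_of_pos (by positivity))
    have : 1 - (Real.log (i + 1) / Real.log i)⁻¹ =
        (Real.log (i + 1) - Real.log i) / Real.log (i + 1) := by
      field_simp
    rw [this, ← div_div]
    gcongr
  · refine le_trans (Real.log_le_sub_one_of_pos (by positivity)) ?_
    have : Real.log (i + 1) / Real.log i - 1 =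
        (Real.log (i + 1) - Real.log i) / Real.log i := by
      field_simp
    rw [this, ← div_div]
    gcongr

theorem abs_sum_one_div_mul_log_sub_le {m n : ℕ} (hm : 2 ≤ m) (hn : m ≤ n) :
    |∑ i ∈ Finset.Ioc m n, 1 / ((i : ℝ) * Real.log i) -
      (Real.log (Real.log n) - Real.log (Real.log m))| ≤ 1 / Real.log m := by
  have hm' : (2 : ℝ) ≤ m := by exact_mod_cast hm
  have key : ∀ n, m ≤ n →
      ∑ i ∈ Finset.Ioc m n, 1 / ((i : ℝ) * Real.log i) ≤
        Real.log (Real.log n) - Real.log (Real.log m) ∧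
      Real.log (Real.log n) - Real.log (Real.log m) ≤
        ∑ i ∈ Finset.Ioc m n, 1 / ((i : ℝ) * Real.log i) +
          (1 / (m * Real.log m) - 1 / (n * Real.log n)) := by
    intro n hn
    induction n, hn using Nat.le_induction with
    | base => simp
    | succ n hn ih =>
      rw [Finset.sum_Ioc_succ_top hn]
      have := loglog_sub_bounds (hm.trans hn)
      push_cast
      constructor <;> linarith [this.1, this.2, ih.1, ih.2]
  obtain ⟨h1, h2⟩ := key n hn
  have hn' : (2 : ℝ) ≤ n := by exact_mod_cast hm.trans hn
  have h3 : 0 ≤ 1 / ((n : ℝ) * Real.log n) := by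
    have := Real.log_pos (x := n) (by linarith)
    positivity
  have hl : 0 < Real.log m := Real.log_pos (x := m) (by linarith)
  have h4 : 1 / ((m : ℝ) * Real.log m) ≤ 1 / Real.log m := by
    apply one_div_le_one_div_of_le hl
    nlinarith
  have : 0 < 1 / Real.log m := by positivity
  rw [abs_le]
  constructor <;> linarith

/-- The sum of `1 / p` over elements `p ≤ n` of `A`. -/
noncomputable def recipSum (A : Set ℕ) (n : ℕ) : ℝ :=
  ∑ p ∈ Finset.Ioc 0 n, A.indicator (fun p : ℕ => 1 / (p : ℝ)) p

theorem recipSum_sub (A : Set ℕ) {m n : ℕ} (h : m ≤ n) :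
    recipSum A n - recipSum A m =
      ∑ p ∈ Finset.Ioc m n, A.indicator (fun p : ℕ => 1 / (p : ℝ)) p := by
  rw [recipSum, recipSum, ← Finset.sum_Ioc_consecutive _ (Nat.zero_le m) h]
  ring

/-- A form of Mertens' second theorem. -/
theorem exists_abs_recipSum_primes_sub_le :
    ∃ C : ℝ, 0 ≤ C ∧ ∀ m n : ℕ, 2 ≤ m → m ≤ n →
      |recipSum {p | p.Prime} n - recipSum {p | p.Prime} m -
        (Real.log (Real.log n) - Real.log (Real.log m))| ≤ C / Real.log m := by
  obtain ⟨C, hC⟩ := exists_abs_sum_log_div_sub_log_le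
  have hC0 : 0 ≤ C := (abs_nonneg _).trans (hC 1 one_pos)
  refine ⟨2 * (C + 1) + 1, by linarith, fun m n hm hn => ?_⟩
  set b : ℕ → ℝ := fun i => (if i.Prime then Real.log i / i else 0) - 1 / i with hb
  have hB : ∀ n, 0 < n → |∑ i ∈ Finset.Ioc 0 n, b i| ≤ C + 1 := by
    intro n hn
    have h1 := hC n hn
    have e : ∑ i ∈ Finset.Ioc 0 n, b i =
        ∑ p ∈ Finset.Ioc 0 n with p.Prime, Real.log p / p - (harmonic n : ℝ) := by
      rw [hb, Finset.sum_sub_distrib, Finset.sum_filter, harmonic_eq_sum_Icc]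
      push_cast
      simp [← Finset.Icc_add_one_left_eq_Ioc]
    rw [e]
    have h2 := log_add_one_le_harmonic n
    have h3 := harmonic_le_one_add_log n
    have h4 : Real.log n ≤ Real.log (n + 1 : ℕ) :=
      Real.log_le_log (by exact_mod_cast hn) (by push_cast; linarith)
    rw [abs_le] at *
    constructor <;> linarith [h1.1, h1.2]
  have hBm : ∀ n, m ≤ n → |∑ i ∈ Finset.Ioc m n, b i| ≤ 2 * (C + 1) := by
    intro n hn
    have h1 := hB n (by lia)
    have h2 := hB m (by lia)
    have h3 := Finset.sum_Ioc_consecutive b (Nat.zero_le m) hn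
    rw [abs_le] at *
    constructor <;> linarith [h1.1, h1.2, h2.1, h2.2]
  have hlogpos : ∀ i : ℕ, m < i → 0 < Real.log i := fun i hi =>
    Real.log_pos (by exact_mod_cast (by lia : 1 < i))
  have h1 := abs_sum_Ioc_mul_le_of_antitoneOn (b := b) (g := fun i : ℕ => 1 / Real.log i)
    (m := m) (C := 2 * (C + 1))
    (fun i hi j _ hij => one_div_le_one_div_of_le (hlogpos i hi)
      (Real.log_le_log (by have := Set.mem_Ioi.1 hi; exact_mod_cast (by lia : 0 < i))
        (by exact_mod_cast hij)))
    (fun i hi => (one_div_pos.2 (hlogpos i hi)).le) hBm n hn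
  have hlm : 0 < Real.log m := Real.log_pos (by exact_mod_cast (by lia : 1 < m))
  have hlm' : (2 * (C + 1)) * (1 / Real.log (m + 1 : ℕ)) ≤ 2 * (C + 1) * (1 / Real.log m) := by
    gcongr
    lia
  have h2 := abs_sum_one_div_mul_log_sub_le hm hn
  have e : ∑ i ∈ Finset.Ioc m n, b i * (1 / Real.log i) =
      recipSum {p | p.Prime} n - recipSum {p | p.Prime} m -
        ∑ i ∈ Finset.Ioc m n, 1 / ((i : ℝ) * Real.log i) := by
    rw [recipSum_sub _ hn, ← Finset.sum_sub_distrib]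
    refine Finset.sum_congr rfl fun i hi => ?_
    have hl := hlogpos i (Finset.mem_Ioc.1 hi).1
    have hi0 : (i : ℝ) ≠ 0 := by
      have := (Finset.mem_Ioc.1 hi).1
      exact_mod_cast (by lia : i ≠ 0)
    by_cases hp : i.Prime
    · simp only [hb, hp, if_true, Set.indicator, Set.mem_ofPred_eq]
      field_simp
    · simp only [hb, hp, if_false, Set.indicator, Set.mem_ofPred_eq]
      field_simp
      ring
  rw [e] at h1
  have : (2 * (C + 1) + 1) / Real.log m = 2 * (C + 1) * (1 / Real.log m) + 1 / Real.log m := by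
    ring
  rw [this]
  rw [abs_le] at *
  constructor <;> linarith [h1.1, h1.2, h2.1, h2.2]

theorem recipSum_mono (A : Set ℕ) : Monotone (recipSum A) := fun m n h => by
  rw [← sub_nonneg, recipSum_sub A h]
  exact Finset.sum_nonneg fun p _ => Set.indicator_nonneg (fun p _ => by positivity) p

theorem recipSum_sub_le_of_subset {A B : Set ℕ} (hAB : A ⊆ B) {m n : ℕ} (h : m ≤ n) :
    recipSum A n - recipSum A m ≤ recipSum B n - recipSum B m := by
  rw [recipSum_sub A h, recipSum_sub B h]
  refine Finset.sum_le_sum fun p _ => ?_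
  exact Set.indicator_le_indicator_of_subset hAB (fun p => by positivity) p

/-- Summation by parts against `1 / i`, for partial sums that are `o(n / log n)`. -/
theorem abs_sum_Ioc_div_le {δ : ℕ → ℝ} {ε : ℝ} {m : ℕ} (hm : 2 ≤ m)
    (hR : ∀ n, m ≤ n → |∑ i ∈ Finset.Ioc 0 n, δ i| ≤ ε * (n / Real.log n)) {n : ℕ} (hn : m ≤ n) :
    |∑ i ∈ Finset.Ioc m n, δ i / i| ≤
      ε * (2 / Real.log m + 2 * (Real.log (Real.log n) - Real.log (Real.log m))) := by
  have hlogpos : ∀ i : ℕ, m ≤ i → 0 < Real.log i := fun i hi =>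
    Real.log_pos (by exact_mod_cast (by lia : 1 < i))
  have hε : 0 ≤ ε := by
    have h1 := (abs_nonneg _).trans (hR m le_rfl)
    have h2 : 0 < (m : ℝ) / Real.log m :=
      div_pos (by exact_mod_cast (by lia : 0 < m)) (hlogpos m le_rfl)
    exact nonneg_of_mul_nonneg_left h1 h2
  set R : ℕ → ℝ := fun n => ∑ i ∈ Finset.Ioc 0 n, δ i with hRdef
  have key : ∀ n, m ≤ n → |∑ i ∈ Finset.Ioc m n, δ i / i - R n / n + R m / m| ≤
      ε * (2 * (Real.log (Real.log n) - Real.log (Real.log m))) := by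
    intro n hn
    induction n, hn using Nat.le_induction with
    | base => simp
    | succ n hn ih =>
      have hn0 : (2 : ℝ) ≤ n := by exact_mod_cast hm.trans hn
      have hl := hlogpos n hn
      have hl1 : 0 < Real.log (n + 1) := Real.log_pos (by linarith)
      rw [Finset.sum_Ioc_succ_top hn]
      have hs : R (n + 1) = R n + δ (n + 1) := by
        simp only [hRdef]; rw [Finset.sum_Ioc_succ_top (Nat.zero_le n)]
      have h1 := (loglog_sub_bounds (hm.trans hn)).1
      have h2 : Real.log (n + 1) ≤ 2 * Real.log n := by
        have : Real.log ((n : ℝ) ^ 2) = 2 * Real.log n := by rw [Real.log_pow]; norm_num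
        rw [← this]
        exact Real.log_le_log (by linarith) (by nlinarith)
      have h3 : |R n / n - R n / (n + 1 : ℝ)| ≤
          ε * (2 * (Real.log (Real.log (n + 1)) - Real.log (Real.log n))) := by
        have e : R n / n - R n / (n + 1 : ℝ) = R n * (1 / (n * (n + 1 : ℝ))) := by
          field_simp; ring
        rw [e, abs_mul, abs_of_nonneg (a := 1 / (n * (n + 1 : ℝ))) (by positivity)]
        calc |R n| * (1 / (n * (n + 1 : ℝ)))
            ≤ ε * (n / Real.log n) * (1 / (n * (n + 1 : ℝ))) := by
              gcongr
              exact hR n hn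
          _ = ε * (2 * (1 / ((n + 1 : ℝ) * (2 * Real.log n)))) := by
              field_simp
          _ ≤ ε * (2 * (1 / ((n + 1 : ℝ) * Real.log (n + 1)))) := by gcongr
          _ ≤ _ := by gcongr
      push_cast
      have e : ∑ i ∈ Finset.Ioc m n, δ i / i + δ (n + 1) / (n + 1 : ℝ) - R (n + 1) / (n + 1 : ℝ) +
          R m / m = (∑ i ∈ Finset.Ioc m n, δ i / i - R n / n + R m / m) +
            (R n / n - R n / (n + 1 : ℝ)) := by
        rw [hs]; ring
      rw [e]
      refine (abs_add_le _ _).trans ?_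
      linarith
  have h1 := key n hn
  have hR' : ∀ i, m ≤ i → |R i / i| ≤ ε / Real.log m := by
    intro i hi
    have hi0 : (0 : ℝ) < i := by exact_mod_cast (by lia : 0 < i)
    rw [abs_div, Nat.abs_cast, div_le_iff₀ hi0]
    refine (hR i hi).trans ?_
    have := hlogpos m le_rfl
    have h : Real.log m ≤ Real.log i :=
      Real.log_le_log (by exact_mod_cast (by lia : 0 < m)) (by exact_mod_cast hi)
    calc ε * (i / Real.log i) ≤ ε * (i / Real.log m) := by gcongr
      _ = _ := by ring
  have h2 := hR' n hn
  have h3 := hR' m le_rfl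
  have : ε * (2 / Real.log m + 2 * (Real.log (Real.log n) - Real.log (Real.log m))) =
    2 * (ε / Real.log m) + ε * (2 * (Real.log (Real.log n) - Real.log (Real.log m))) := by ring
  rw [this]
  rw [abs_le] at *
  constructor <;> linarith [h1.1, h1.2, h2.1, h2.2, h3.1, h3.2]

theorem ncard_inter_Icc_one (A : Set ℕ) (n : ℕ) :
    ((A ∩ Set.Icc 1 n).ncard : ℝ) = ∑ i ∈ Finset.Ioc 0 n, A.indicator (fun _ => (1 : ℝ)) i := by
  have : A ∩ Set.Icc 1 n = ((Finset.Ioc 0 n).filter (· ∈ A) : Finset ℕ) := by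
    ext x
    simp only [Set.mem_inter_iff, Set.mem_Icc, Finset.coe_filter, Finset.mem_Ioc,
      Set.mem_ofPred_eq, Nat.succ_le_iff]
    tauto
  rw [this, Set.ncard_coe_finset, Finset.card_filter]
  push_cast
  rfl

/-- A set of natural density `θ` in the primes deviates from `θ` times the primes by
`o(n / log n)`. -/
theorem eventually_abs_sum_indicator_sub_le {A : Set ℕ} {θ : ℝ}
    (hdens : Tendsto
      (fun N : ℕ => ((A ∩ Set.Icc 1 N).ncard : ℝ) / (({p : ℕ | Nat.Prime p} ∩ Set.Icc 1 N).ncard : ℝ))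
      atTop (nhds θ)) {ε : ℝ} (hε : 0 < ε) :
    ∀ᶠ n : ℕ in atTop, |∑ i ∈ Finset.Ioc 0 n, (A.indicator (fun _ => (1 : ℝ)) i -
      θ * ({p : ℕ | p.Prime}.indicator (fun _ => (1 : ℝ)) i))| ≤ ε * (n / Real.log n) := by
  have h0 : 0 ≤ Real.log 4 := Real.log_nonneg (by norm_num)
  have h1 := (Chebyshev.eventually_primeCounting_le one_pos).natCast_atTop
  have h2 := (Metric.tendsto_nhds.1 hdens) (ε / (Real.log 4 + 1)) (by positivity)
  filter_upwards [h1, h2, eventually_ge_atTop 2] with n h1 h2 hn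
  rw [Nat.floor_natCast] at h1
  have hpi : ({p : ℕ | Nat.Prime p} ∩ Set.Icc 1 n).ncard = n.primeCounting := by
    have : {p : ℕ | Nat.Prime p} ∩ Set.Icc 1 n = (n.primesLE : Set ℕ) := by
      ext p
      simp only [Set.mem_inter_iff, Set.mem_ofPred_eq, Set.mem_Icc, Finset.mem_coe,
        Nat.mem_primesLE]
      exact ⟨fun h => ⟨h.2.2, h.1⟩, fun h => ⟨h.2, h.2.one_le, h.1⟩⟩
    rw [this, Set.ncard_coe_finset, Nat.primesLE_card_eq_primeCounting]
  rw [Finset.sum_sub_distrib, ← Finset.mul_sum, ← ncard_inter_Icc_one, ← ncard_inter_Icc_one, hpi]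
  rw [hpi, Real.dist_eq] at h2
  have hpos : (0 : ℝ) < n.primeCounting := by
    have : 0 < n.primeCounting := by
      have := Nat.monotone_primeCounting hn
      have h : Nat.primeCounting 2 = 1 := by decide
      lia
    exact_mod_cast this
  calc |((A ∩ Set.Icc 1 n).ncard : ℝ) - θ * n.primeCounting|
      = |((A ∩ Set.Icc 1 n).ncard : ℝ) / n.primeCounting - θ| * n.primeCounting := by
        rw [← abs_of_pos hpos, ← abs_mul, abs_of_pos hpos, sub_mul, div_mul_cancel₀ _ hpos.ne']
    _ ≤ ε / (Real.log 4 + 1) * ((Real.log 4 + 1) * n / Real.log n) := by gcongr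
    _ = _ := by field_simp

theorem exists_abs_recipSum_sub_le {A : Set ℕ} {θ : ℝ}
    (hdens : Tendsto
      (fun N : ℕ => ((A ∩ Set.Icc 1 N).ncard : ℝ) / (({p : ℕ | Nat.Prime p} ∩ Set.Icc 1 N).ncard : ℝ))
      atTop (nhds θ)) {ε : ℝ} (hε : 0 < ε) :
    ∃ m₀ : ℕ, ∀ m n : ℕ, m₀ ≤ m → m ≤ n →
      |recipSum A n - recipSum A m - θ * (Real.log (Real.log n) - Real.log (Real.log m))| ≤
        ε * (1 + (Real.log (Real.log n) - Real.log (Real.log m))) := by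
  obtain ⟨C, hC0, hC⟩ := exists_abs_recipSum_primes_sub_le
  obtain ⟨m₁, hm₁⟩ := eventually_atTop.1 (eventually_abs_sum_indicator_sub_le hdens
    (by positivity : 0 < ε / 4))
  have hlog : Tendsto (fun n : ℕ => Real.log n) atTop atTop :=
    Real.tendsto_log_atTop.comp tendsto_natCast_atTop_atTop
  obtain ⟨m₂, hm₂⟩ := eventually_atTop.1
    (hlog.eventually_ge_atTop (max 1 (2 * (|θ| * C + 1) / ε)))
  refine ⟨max 2 (max m₁ m₂), fun m n hm hn => ?_⟩
  simp only [max_le_iff] at hm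
  obtain ⟨hm2, hmm₁, hmm₂⟩ := hm
  have hl := hm₂ m hmm₂
  rw [max_le_iff] at hl
  have h1 := abs_sum_Ioc_div_le hm2 (fun i hi => hm₁ i (hmm₁.trans hi)) hn
  have h2 := hC m n hm2 hn
  set L := Real.log (Real.log n) - Real.log (Real.log m) with hL
  have hL0 : 0 ≤ L := by
    have h : Real.log m ≤ Real.log n :=
      Real.log_le_log (by exact_mod_cast (by lia : 0 < m)) (by exact_mod_cast hn)
    exact sub_nonneg.2 (Real.log_le_log (by linarith) h)
  have e : recipSum A n - recipSum A m =
      ∑ i ∈ Finset.Ioc m n, (A.indicator (fun _ => (1 : ℝ)) i -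
        θ * ({p : ℕ | p.Prime}.indicator (fun _ => (1 : ℝ)) i)) / i +
      θ * (recipSum {p | p.Prime} n - recipSum {p | p.Prime} m) := by
    rw [recipSum_sub _ hn, recipSum_sub _ hn, Finset.mul_sum, ← Finset.sum_add_distrib]
    refine Finset.sum_congr rfl fun i _ => ?_
    by_cases h1 : i ∈ A <;> by_cases h2 : i.Prime <;> simp [h1, h2] <;> ring
  rw [e]
  have h3 : |θ * (recipSum {p | p.Prime} n - recipSum {p | p.Prime} m - L)| ≤
      |θ| * (C / Real.log m) := by
    rw [abs_mul]; gcongr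
  have h4 : |θ| * (C / Real.log m) ≤ ε / 2 := by
    have h5 : 2 * (|θ| * C + 1) ≤ Real.log m * ε := by
      have := hl.2
      rwa [div_le_iff₀ hε] at this
    rw [← mul_div_assoc, div_le_iff₀ (by linarith)]
    linarith
  have h5 : 2 / Real.log m ≤ 2 := by
    rw [div_le_iff₀ (by linarith)]; linarith
  have h6 : ε / 4 * (2 / Real.log m + 2 * L) ≤ ε / 2 + ε / 2 * L := by nlinarith
  have h7 : 0 ≤ ε / 2 * L := by positivity
  have e2 : ∀ s t : ℝ, s + θ * t - θ * L = s + θ * (t - L) := fun s t => by ring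
  rw [e2]
  refine (abs_add_le _ _).trans ?_
  linarith

/-- `recipSum` in the variable `t = log n`. -/
noncomputable def expRecipSum (A : Set ℕ) (t : ℝ) : ℝ := recipSum A ⌊Real.exp t⌋₊

theorem loglog_floor_exp_bounds {t : ℝ} (ht : Real.log 2 ≤ t) :
    2 ≤ ⌊Real.exp t⌋₊ ∧ Real.log t - Real.log 2 ≤ Real.log (Real.log ⌊Real.exp t⌋₊) ∧
      Real.log (Real.log ⌊Real.exp t⌋₊) ≤ Real.log t := by
  have h2 : 2 ≤ Real.exp t := by rwa [← Real.log_le_iff_le_exp two_pos]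
  have hl2 : 0 < Real.log 2 := Real.log_pos one_lt_two
  have hf : 2 ≤ ⌊Real.exp t⌋₊ := Nat.le_floor (by exact_mod_cast h2)
  have hf' : (2 : ℝ) ≤ ⌊Real.exp t⌋₊ := by exact_mod_cast hf
  have hup : Real.log ⌊Real.exp t⌋₊ ≤ t := by
    rw [Real.log_le_iff_le_exp (by linarith)]
    exact Nat.floor_le (by positivity)
  have hlow : t / 2 ≤ Real.log ⌊Real.exp t⌋₊ := by
    have h3 : Real.exp t ≤ (⌊Real.exp t⌋₊ : ℝ) ^ 2 := by
      have := Nat.lt_floor_add_one (Real.exp t)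
      nlinarith
    have h4 := Real.log_le_log (Real.exp_pos t) h3
    rw [Real.log_exp, Real.log_pow] at h4
    push_cast at h4
    linarith
  refine ⟨hf, ?_, Real.log_le_log (by linarith) hup⟩
  rw [← Real.log_div (by linarith) (by norm_num)]
  exact Real.log_le_log (by linarith) hlow

theorem tendsto_loglog_floor_exp_sub :
    Tendsto (fun t : ℝ => Real.log (Real.log ⌊Real.exp t⌋₊) - Real.log t) atTop (nhds 0) := by
  have h1 : Tendsto (fun t : ℝ => Real.log ⌊Real.exp t⌋₊ - t) atTop (nhds 0) := by
    have h := (tendsto_nat_floor_div_atTop (R := ℝ)).comp Real.tendsto_exp_atTop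
    have h2 := (Real.continuousAt_log one_ne_zero).tendsto.comp h
    rw [Real.log_one] at h2
    refine h2.congr' ?_
    filter_upwards [eventually_ge_atTop (Real.log 2)] with t ht
    have := (loglog_floor_exp_bounds ht).1
    simp only [Function.comp]
    rw [Real.log_div (by positivity) (Real.exp_pos t).ne', Real.log_exp]
  have h2 : Tendsto (fun t : ℝ => 1 + (Real.log ⌊Real.exp t⌋₊ - t) / t) atTop (nhds 1) := by
    simpa using (h1.div_atTop tendsto_id).const_add 1
  have h3 := (Real.continuousAt_log one_ne_zero).tendsto.comp h2
  rw [Real.log_one] at h3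
  refine h3.congr' ?_
  filter_upwards [eventually_ge_atTop (Real.log 2)] with t ht
  have hl2 : 0 < Real.log 2 := Real.log_pos one_lt_two
  have ht0 : 0 < t := by linarith
  have := (loglog_floor_exp_bounds ht).1
  have hl : 0 < Real.log ⌊Real.exp t⌋₊ := Real.log_pos (by exact_mod_cast this)
  simp only [Function.comp]
  rw [← Real.log_div hl.ne' ht0.ne']
  congr 1
  field_simp
  ring

theorem tendsto_expRecipSum_mul_sub {A : Set ℕ} {θ : ℝ}
    (hdens : Tendsto
      (fun N : ℕ => ((A ∩ Set.Icc 1 N).ncard : ℝ) / (({p : ℕ | Nat.Prime p} ∩ Set.Icc 1 N).ncard : ℝ))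
      atTop (nhds θ)) {u : ℝ} (hu : 0 < u) :
    Tendsto (fun t => expRecipSum A (u * t) - expRecipSum A t) atTop (nhds (θ * Real.log u)) := by
  have hut : Tendsto (fun t : ℝ => u * t) atTop atTop := tendsto_id.const_mul_atTop hu
  set l : ℝ → ℝ := fun t => Real.log (Real.log ⌊Real.exp t⌋₊) with hl
  have hL : Tendsto (fun t => l (u * t) - l t) atTop (nhds (Real.log u)) := by
    have h := (tendsto_loglog_floor_exp_sub.comp hut).sub tendsto_loglog_floor_exp_sub
    have h' := h.add_const (Real.log u)
    simp only [sub_zero, zero_add] at h'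
    refine h'.congr' ?_
    filter_upwards [eventually_gt_atTop 0] with t ht
    simp only [Function.comp, hl]
    rw [Real.log_mul hu.ne' ht.ne']
    ring
  have hfl : Tendsto (fun t : ℝ => ⌊Real.exp t⌋₊) atTop atTop :=
    tendsto_nat_floor_atTop.comp Real.tendsto_exp_atTop
  have hz : Tendsto (fun t => expRecipSum A (u * t) - expRecipSum A t - θ * (l (u * t) - l t))
      atTop (nhds 0) := by
    rw [Metric.tendsto_nhds]
    intro ε hε
    obtain ⟨m₀, hm₀⟩ := exists_abs_recipSum_sub_le hdens
      (ε := ε / (3 + |Real.log u|)) (by positivity)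
    filter_upwards [hfl.eventually_ge_atTop m₀, (hfl.comp hut).eventually_ge_atTop m₀,
      (Metric.tendsto_nhds.1 hL) 1 one_pos] with t h1 h2 h3
    rw [Real.dist_eq] at h3 ⊢
    rw [sub_zero]
    have habs : |l (u * t) - l t| < 1 + |Real.log u| := by
      have := abs_sub_abs_le_abs_sub (l (u * t) - l t) (Real.log u)
      linarith
    have key : |expRecipSum A (u * t) - expRecipSum A t - θ * (l (u * t) - l t)| ≤
        ε / (3 + |Real.log u|) * (1 + |l (u * t) - l t|) := by
      rcases le_total ⌊Real.exp t⌋₊ ⌊Real.exp (u * t)⌋₊ with h | h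
      · refine (hm₀ _ _ h1 h).trans ?_
        gcongr
        exact le_abs_self _
      · have h4 := hm₀ _ _ h2 h
        rw [← abs_neg]
        have e : -(expRecipSum A (u * t) - expRecipSum A t - θ * (l (u * t) - l t)) =
          expRecipSum A t - expRecipSum A (u * t) - θ * (l t - l (u * t)) := by ring
        rw [e]
        refine h4.trans ?_
        gcongr
        rw [abs_sub_comm]
        exact le_abs_self _
    refine lt_of_le_of_lt key ?_
    rw [div_mul_eq_mul_div, div_lt_iff₀ (by positivity)]
    exact mul_lt_mul_of_pos_left (by linarith) hε
  have := hz.add (hL.const_mul θ)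
  simpa using this

theorem exists_abs_expRecipSum_mul_sub_le {A : Set ℕ} (hA : ∀ p ∈ A, Nat.Prime p) :
    ∃ C : ℝ, ∀ t u : ℝ, 1 ≤ t → 0 < u →
      |expRecipSum A (u * t) - expRecipSum A t| ≤ C + |Real.log u| := by
  obtain ⟨C, hC0, hC⟩ := exists_abs_recipSum_primes_sub_le
  have hl2 : 0 < Real.log 2 := Real.log_pos one_lt_two
  have hl21 : Real.log 2 ≤ 1 := by linarith [Real.log_two_lt_d9]
  set K := C / Real.log 2 with hK
  have hdiff : ∀ m n : ℕ, 2 ≤ m → m ≤ n → |recipSum A n - recipSum A m| ≤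
      K + |Real.log (Real.log n) - Real.log (Real.log m)| := by
    intro m n hm hn
    rw [abs_of_nonneg (sub_nonneg.2 (recipSum_mono A hn))]
    refine (recipSum_sub_le_of_subset (B := {p | p.Prime}) hA hn).trans ?_
    have h1 := hC m n hm hn
    have h2 : C / Real.log m ≤ K := by
      rw [hK]
      gcongr
      exact_mod_cast hm
    have h3 := le_abs_self (Real.log (Real.log n) - Real.log (Real.log m))
    linarith [(abs_le.1 h1).2]
  have hdiff' : ∀ t v : ℝ, Real.log 2 ≤ t → Real.log 2 ≤ v →
      |expRecipSum A v - expRecipSum A t| ≤ K + |Real.log v - Real.log t| + 2 := by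
    intro t v ht hv
    obtain ⟨a1, a2, a3⟩ := loglog_floor_exp_bounds ht
    obtain ⟨b1, b2, b3⟩ := loglog_floor_exp_bounds hv
    have h : |Real.log (Real.log ⌊Real.exp v⌋₊) - Real.log (Real.log ⌊Real.exp t⌋₊)| ≤
        |Real.log v - Real.log t| + 2 := by
      have h1 := le_abs_self (Real.log v - Real.log t)
      have h2 := neg_abs_le (Real.log v - Real.log t)
      rw [abs_le]
      constructor <;> linarith
    rcases le_total ⌊Real.exp t⌋₊ ⌊Real.exp v⌋₊ with h' | h'
    · have := hdiff _ _ a1 h'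
      simp only [expRecipSum]
      linarith
    · have := hdiff _ _ b1 h'
      rw [abs_sub_comm, abs_sub_comm (Real.log _)] at this
      simp only [expRecipSum]
      linarith
  refine ⟨K + 2 + |Real.log (Real.log 2)| + |expRecipSum A (Real.log 2)|, fun t u ht hu => ?_⟩
  have p1 := abs_nonneg (Real.log (Real.log 2))
  have p2 := abs_nonneg (expRecipSum A (Real.log 2))
  rcases le_or_gt (Real.log 2) (u * t) with h | h
  · have := hdiff' t (u * t) (by linarith) h
    rw [Real.log_mul hu.ne' (by linarith), add_sub_cancel_right] at this
    linarith
  · have hz : expRecipSum A (u * t) = 0 := by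
      have : ⌊Real.exp (u * t)⌋₊ < 2 := by
        rw [Nat.floor_lt (by positivity)]
        rw [← Real.lt_log_iff_exp_lt (by norm_num)]
        exact_mod_cast h
      rw [expRecipSum, recipSum]
      refine Finset.sum_eq_zero fun i hi => ?_
      have hi := (Finset.mem_Ioc.1 hi).2
      refine Set.indicator_of_notMem (fun hA' => ?_) _
      have := (hA i hA').two_le
      lia
    have h1 := hdiff' (Real.log 2) t le_rfl (by linarith)
    have ht0 : 0 ≤ Real.log t := Real.log_nonneg ht
    have h2 : |Real.log t - Real.log (Real.log 2)| ≤ |Real.log u| + |Real.log (Real.log 2)| := by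
      have h3 := Real.log_le_log (by positivity) h.le
      rw [Real.log_mul hu.ne' (by linarith)] at h3
      have h4 : Real.log (Real.log 2) ≤ 0 := Real.log_nonpos hl2.le hl21
      have h5 := neg_abs_le (Real.log u)
      rw [abs_of_nonpos h4, abs_of_nonneg (by linarith)]
      linarith
    rw [hz, zero_sub, abs_neg]
    have h3 := abs_sub_abs_le_abs_sub (expRecipSum A t) (expRecipSum A (Real.log 2))
    linarith

open MeasureTheory in
theorem integrableOn_log_mul_exp_neg :
    IntegrableOn (fun u : ℝ => Real.log u * Real.exp (-u)) (Set.Ioi 0) := by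
  have h : MellinConvergent (fun t : ℝ => Real.log t • (Real.exp (-t) : ℂ)) 1 := by
    refine (mellin_hasDerivAt_of_isBigO_rpow (E := ℂ) (a := 2) (b := 0) ?_ ?_ ?_ ?_ ?_).1
    · refine (Continuous.continuousOn ?_).locallyIntegrableOn measurableSet_Ioi
      fun_prop
    · rw [← Asymptotics.isBigO_norm_left]
      simp_rw [Complex.norm_real, Asymptotics.isBigO_norm_left]
      simpa using (isLittleO_exp_neg_mul_rpow_atTop zero_lt_one (-2)).isBigO
    · norm_num
    · simp_rw [neg_zero, Real.rpow_zero]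
      refine Asymptotics.isBigO_const_of_tendsto (?_ : Tendsto _ _ (nhds (1 : ℂ))) one_ne_zero
      rw [(by simp : (1 : ℂ) = Real.exp (-0))]
      exact (Continuous.tendsto (by fun_prop) 0).mono_left inf_le_left
    · norm_num
  have h' := (show Integrable _ _ from h).re
  refine h'.congr (Eventually.of_forall fun u => ?_)
  simp [-Complex.ofReal_exp]

open MeasureTheory in
theorem integral_log_mul_exp_neg :
    ∫ u in Set.Ioi (0 : ℝ), Real.log u * Real.exp (-u) = -Real.eulerMascheroniConstant := by
  have h1 := Complex.hasDerivAt_GammaIntegral (s := 1) (by norm_num)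
  have h2 : HasDerivAt Complex.Gamma (-Real.eulerMascheroniConstant : ℂ) 1 := by
    have := Complex.hasDerivAt_Gamma_one
    simpa using this
  have h3 : Complex.Gamma =ᶠ[nhds 1] Complex.GammaIntegral := by
    have : {s : ℂ | 0 < s.re} ∈ nhds (1 : ℂ) :=
      (isOpen_lt continuous_const Complex.continuous_re).mem_nhds (by simp)
    filter_upwards [this] with s hs using Complex.Gamma_eq_integral hs
  have h4 := (h1.congr_of_eventuallyEq h3).unique h2
  rw [← Complex.ofReal_inj, ← integral_complex_ofReal]
  push_cast
  rw [← h4]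
  simp

open MeasureTheory in
theorem hasSum_rpow_integral_expRecipSum {A : Set ℕ} (hA : ∀ p ∈ A, Nat.Prime p) {t : ℝ}
    (ht : 0 < t) :
    HasSum (A.indicator fun p : ℕ => (p : ℝ) ^ (-1 - 1 / t))
      (∫ u in Set.Ioi (0 : ℝ), Real.exp (-u) * expRecipSum A (u * t)) := by
  set F : ℕ → ℝ → ℝ := fun p u =>
    A.indicator (fun p : ℕ => 1 / (p : ℝ)) p *
      (Set.Ioi (Real.log p / t)).indicator (fun u => Real.exp (-u)) u with hF
  have hFint : ∀ p, Integrable (F p) (volume.restrict (Set.Ioi 0)) := fun p =>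
    (((integrableOn_exp_neg_Ioi _).integrable_indicator measurableSet_Ioi).restrict).const_mul _
  have hFI : ∀ p, ∫ u in Set.Ioi (0 : ℝ), F p u =
      A.indicator (fun p : ℕ => (p : ℝ) ^ (-1 - 1 / t)) p := by
    intro p
    simp only [hF]
    rw [integral_const_mul, setIntegral_indicator measurableSet_Ioi, Set.Ioi_inter_Ioi]
    by_cases hp : p ∈ A
    · have h0 : (0 : ℝ) < p := by exact_mod_cast (hA p hp).pos
      rw [Set.indicator_of_mem hp, Set.indicator_of_mem hp, max_eq_right (by
        have := Real.log_natCast_nonneg p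
        positivity), integral_exp_neg_Ioi, Real.rpow_def_of_pos h0, one_div, ← Real.exp_log h0,
        ← Real.exp_neg, ← Real.exp_add, Real.log_exp]
      congr 1
      ring
    · simp [hp]
  have hsum : Summable (A.indicator fun p : ℕ => (p : ℝ) ^ (-1 - 1 / t)) := by
    refine Summable.indicator ?_ A
    refine Real.summable_nat_rpow.2 ?_
    have : 0 < 1 / t := by positivity
    linarith
  have hnn : ∀ p u, 0 ≤ F p u := fun p u =>
    mul_nonneg (Set.indicator_nonneg (fun p _ => by positivity) p)
      (Set.indicator_nonneg (fun u _ => (Real.exp_pos _).le) u)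
  have h := hasSum_integral_of_summable_integral_norm hFint (by
    simp_rw [Real.norm_of_nonneg (hnn _ _), hFI]
    exact hsum)
  simp_rw [hFI] at h
  suffices e : ∫ u in Set.Ioi (0 : ℝ), Real.exp (-u) * expRecipSum A (u * t) =
      ∫ u in Set.Ioi (0 : ℝ), ∑' p, F p u by rwa [e]
  refine integral_congr_ae ?_
  have hae : ∀ᵐ u ∂(volume.restrict (Set.Ioi (0 : ℝ))), ∀ p : ℕ, u ≠ Real.log p / t := by
    rw [ae_all_iff]
    intro p
    exact ae_restrict_of_ae (by simp [ae_iff])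
  filter_upwards [hae] with u hu
  rw [tsum_eq_sum (s := Finset.Ioc 0 ⌊Real.exp (u * t)⌋₊), expRecipSum, recipSum, Finset.mul_sum]
  · refine Finset.sum_congr rfl fun p hp => ?_
    have hp := Finset.mem_Ioc.1 hp
    have : Real.log p / t < u := by
      refine lt_of_le_of_ne ?_ (hu p).symm
      rw [div_le_iff₀ ht, Real.log_le_iff_le_exp (by exact_mod_cast hp.1)]
      exact (Nat.le_floor_iff (Real.exp_pos _).le).1 hp.2
    simp only [hF]
    rw [Set.indicator_of_mem (s := Set.Ioi _) (Set.mem_Ioi.2 this), mul_comm]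
  · intro p hp
    simp only [hF]
    by_cases hpA : p ∈ A
    · have h0 := (hA p hpA).pos
      rw [Set.indicator_of_notMem (s := Set.Ioi _), mul_zero]
      intro hlt
      apply hp
      rw [Finset.mem_Ioc, Nat.le_floor_iff (Real.exp_pos _).le,
        ← Real.log_le_iff_le_exp (by exact_mod_cast h0), ← div_le_iff₀ ht]
      exact ⟨h0, (Set.mem_Ioi.1 hlt).le⟩
    · simp [hpA]

theorem measurable_expRecipSum (A : Set ℕ) : Measurable (expRecipSum A) :=
  ((recipSum_mono A).comp (fun _ _ h => Nat.floor_mono (Real.exp_le_exp.2 h))).measurable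

open MeasureTheory in
/-- The prime zeta function of `A` near `1`, compared with the partial sums of `1 / p`. -/
theorem tendsto_tsum_rpow_sub_expRecipSum {A : Set ℕ} (hA : ∀ p ∈ A, Nat.Prime p) {θ : ℝ}
    (hdens : Tendsto
      (fun N : ℕ => ((A ∩ Set.Icc 1 N).ncard : ℝ) / (({p : ℕ | Nat.Prime p} ∩ Set.Icc 1 N).ncard : ℝ))
      atTop (nhds θ)) :
    Tendsto (fun t => ∑' p, A.indicator (fun p : ℕ => (p : ℝ) ^ (-1 - 1 / t)) p - expRecipSum A t)
      atTop (nhds (-(Real.eulerMascheroniConstant * θ))) := by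
  obtain ⟨C, hC⟩ := exists_abs_expRecipSum_mul_sub_le hA
  have hexp : IntegrableOn (fun u : ℝ => Real.exp (-u)) (Set.Ioi 0) := integrableOn_exp_neg_Ioi 0
  have hbound : IntegrableOn (fun u : ℝ => C * Real.exp (-u) + |Real.log u * Real.exp (-u)|)
      (Set.Ioi 0) := (hexp.const_mul C).add integrableOn_log_mul_exp_neg.abs
  have hmeas : ∀ t : ℝ, AEStronglyMeasurable
      (fun u => Real.exp (-u) * (expRecipSum A (u * t) - expRecipSum A t))
      (volume.restrict (Set.Ioi 0)) := fun t => by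
    have := measurable_expRecipSum A
    exact Measurable.aestronglyMeasurable (by fun_prop)
  have hle : ∀ t : ℝ, 1 ≤ t → ∀ᵐ u ∂(volume.restrict (Set.Ioi (0 : ℝ))),
      ‖Real.exp (-u) * (expRecipSum A (u * t) - expRecipSum A t)‖ ≤
        C * Real.exp (-u) + |Real.log u * Real.exp (-u)| := by
    intro t ht
    filter_upwards [ae_restrict_mem measurableSet_Ioi] with u hu
    rw [norm_mul, Real.norm_eq_abs, Real.norm_eq_abs, abs_mul, Real.abs_exp]
    nlinarith [hC t u ht hu, Real.exp_pos (-u)]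
  have hlim : Tendsto (fun t => ∫ u in Set.Ioi (0 : ℝ),
      Real.exp (-u) * (expRecipSum A (u * t) - expRecipSum A t)) atTop
      (nhds (∫ u in Set.Ioi (0 : ℝ), Real.exp (-u) * (θ * Real.log u))) := by
    refine tendsto_integral_filter_of_dominated_convergence _ (Eventually.of_forall hmeas)
      ((eventually_ge_atTop 1).mono hle) hbound ?_
    filter_upwards [ae_restrict_mem measurableSet_Ioi] with u hu
    exact (tendsto_expRecipSum_mul_sub hdens hu).const_mul _
  have e : ∫ u in Set.Ioi (0 : ℝ), Real.exp (-u) * (θ * Real.log u) =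
      -(Real.eulerMascheroniConstant * θ) := by
    rw [← neg_mul, mul_comm _ θ, ← integral_log_mul_exp_neg, ← integral_const_mul]
    congr 1 with u
    ring
  rw [e] at hlim
  refine hlim.congr' ?_
  filter_upwards [eventually_ge_atTop 1] with t ht
  rw [(hasSum_rpow_integral_expRecipSum hA (by linarith)).tsum_eq]
  have h1 : IntegrableOn (fun u => Real.exp (-u) * (expRecipSum A (u * t) - expRecipSum A t))
      (Set.Ioi 0) := Integrable.mono' hbound (hmeas t) (hle t ht)
  have h2 := integral_add h1 (hexp.mul_const (expRecipSum A t))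
  rw [integral_mul_const, integral_exp_neg_Ioi_zero, one_mul] at h2
  rw [eq_sub_iff_add_eq, ← h2]
  congr 1 with u
  ring

open MeasureTheory in
/-- Convergence of moments implies convergence of integrals of continuous functions on `[0, 1]`. -/
theorem tendsto_tsum_mul_of_tendsto_moments {l : Filter ℝ} {w x : ℝ → ℕ → ℝ} {k y : ℝ → ℝ}
    {s : Set ℝ} (hs : MeasurableSet s)
    (hw : ∀ t n, 0 ≤ w t n) (hw1 : ∀ᶠ t in l, HasSum (w t) 1)
    (hx : ∀ t n, x t n ∈ Set.Icc (0 : ℝ) 1)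
    (hk : ∀ u ∈ s, 0 ≤ k u) (hkint : IntegrableOn k s) (hk1 : ∫ u in s, k u = 1)
    (hy : Measurable y) (hy1 : ∀ u ∈ s, y u ∈ Set.Icc (0 : ℝ) 1)
    (hmom : ∀ m : ℕ, Tendsto (fun t => ∑' n, w t n * x t n ^ m) l
      (nhds (∫ u in s, k u * y u ^ m)))
    {g : ℝ → ℝ} (hg : Continuous g) :
    Tendsto (fun t => ∑' n, w t n * g (x t n)) l (nhds (∫ u in s, k u * g (y u))) := by
  have hbdd : ∀ h : ℝ → ℝ, Continuous h → ∃ M, ∀ z ∈ Set.Icc (0 : ℝ) 1, |h z| ≤ M :=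
    fun h hh => by
      obtain ⟨M, hM⟩ := (isCompact_Icc (a := (0 : ℝ)) (b := 1)).exists_bound_of_continuousOn
        hh.continuousOn
      exact ⟨M, hM⟩
  have hsum : ∀ h : ℝ → ℝ, Continuous h → ∀ t, HasSum (w t) 1 →
      Summable fun n => w t n * h (x t n) := by
    intro h hh t ht
    obtain ⟨M, hM⟩ := hbdd h hh
    refine Summable.of_norm_bounded (ht.summable.mul_right M) fun n => ?_
    rw [norm_mul, Real.norm_of_nonneg (hw t n)]
    exact mul_le_mul_of_nonneg_left (hM _ (hx t n)) (hw t n)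
  have hint : ∀ h : ℝ → ℝ, Continuous h → IntegrableOn (fun u => k u * h (y u)) s := by
    intro h hh
    obtain ⟨M, hM⟩ := hbdd h hh
    refine Integrable.mul_bdd (c := M) hkint (hh.measurable.comp hy).aestronglyMeasurable ?_
    filter_upwards [ae_restrict_mem hs] with u hu using hM _ (hy1 u hu)
  have hpoly : ∀ p : Polynomial ℝ, Tendsto (fun t => ∑' n, w t n * p.eval (x t n)) l
      (nhds (∫ u in s, k u * p.eval (y u))) := by
    intro p
    have e1 : ∫ u in s, k u * p.eval (y u) =
        ∑ m ∈ Finset.range (p.natDegree + 1), p.coeff m * ∫ u in s, k u * y u ^ m := by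
      simp_rw [← integral_const_mul]
      rw [← integral_finsetSum _ fun m _ => (hint _ (continuous_pow m)).const_mul _]
      congr 1 with u
      rw [Polynomial.eval_eq_sum_range, Finset.mul_sum]
      exact Finset.sum_congr rfl fun _ _ => by ring
    rw [e1]
    refine (tendsto_finsetSum _ fun m _ => (hmom m).const_mul (p.coeff m)).congr' ?_
    filter_upwards [hw1] with t ht
    simp_rw [← tsum_mul_left]
    rw [← Summable.tsum_finsetSum fun m _ => (hsum _ (continuous_pow m) t ht).mul_left _]
    congr 1 with n
    rw [Polynomial.eval_eq_sum_range, Finset.mul_sum]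
    exact Finset.sum_congr rfl fun _ _ => by ring
  rw [Metric.tendsto_nhds]
  intro ε hε
  obtain ⟨p, hp⟩ := exists_polynomial_near_of_continuousOn 0 1 g hg.continuousOn (ε / 3)
    (by positivity)
  filter_upwards [hw1, Metric.tendsto_nhds.1 (hpoly p) (ε / 3) (by positivity)] with t ht h2
  rw [Real.dist_eq] at h2 ⊢
  have h1 : |∑' n, w t n * p.eval (x t n) - ∑' n, w t n * g (x t n)| ≤ ε / 3 := by
    rw [← (hsum _ p.continuous t ht).tsum_sub (hsum _ hg t ht)]
    have hb : ∀ n, ‖w t n * p.eval (x t n) - w t n * g (x t n)‖ ≤ w t n * (ε / 3) := by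
      intro n
      rw [← mul_sub, norm_mul, Real.norm_of_nonneg (hw t n)]
      exact mul_le_mul_of_nonneg_left (hp _ (hx t n)).le (hw t n)
    have := tsum_of_norm_bounded (ht.mul_right (ε / 3)) hb
    rwa [one_mul] at this
  have h3 : |(∫ u in s, k u * p.eval (y u)) - ∫ u in s, k u * g (y u)| ≤ ε / 3 := by
    rw [← integral_sub (hint _ p.continuous) (hint _ hg)]
    have := norm_integral_le_of_norm_le (f := fun u => k u * p.eval (y u) - k u * g (y u))
      (hkint.mul_const (ε / 3)) (by
        filter_upwards [ae_restrict_mem hs] with u hu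
        rw [← mul_sub, norm_mul, Real.norm_of_nonneg (hk u hu)]
        exact mul_le_mul_of_nonneg_left (hp _ (hy1 u hu)).le (hk u hu))
    rwa [integral_mul_const, hk1, one_mul] at this
  rw [abs_le] at h1 h3
  rw [abs_lt] at h2 ⊢
  constructor <;> linarith [h1.1, h1.2, h3.1, h3.2, h2.1, h2.2]

/-- A continuous approximation to `x⁻¹` on `[b, ∞)`, vanishing on `(-∞, a]`. -/
noncomputable def invCutoff (a b x : ℝ) : ℝ := (max x a)⁻¹ * max 0 (min 1 ((x - a) / (b - a)))

theorem continuous_invCutoff {a b : ℝ} (ha : 0 < a) : Continuous (invCutoff a b) := by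
  unfold invCutoff
  refine Continuous.mul (Continuous.inv₀ (by fun_prop) fun x => ?_) (by fun_prop)
  exact (ha.trans_le (le_max_right _ _)).ne'

theorem invCutoff_nonneg {a b x : ℝ} (ha : 0 < a) : 0 ≤ invCutoff a b x :=
  mul_nonneg (inv_nonneg.2 (ha.le.trans (le_max_right _ _))) (le_max_left _ _)

theorem invCutoff_of_le {a b x : ℝ} (hab : a < b) (hx : x ≤ a) : invCutoff a b x = 0 := by
  rw [invCutoff, max_eq_left (b := min _ _), mul_zero]
  exact (min_le_right _ _).trans (div_nonpos_of_nonpos_of_nonneg (by linarith) (by linarith))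

theorem invCutoff_le {a b x : ℝ} (hx : 0 < x) : invCutoff a b x ≤ x⁻¹ := by
  rw [invCutoff]
  calc (max x a)⁻¹ * max 0 (min 1 ((x - a) / (b - a))) ≤ x⁻¹ * 1 := by
        gcongr
        · exact le_max_left _ _
        · exact max_le zero_le_one (min_le_left _ _)
    _ = x⁻¹ := mul_one _

theorem invCutoff_of_ge {a b x : ℝ} (hab : a < b) (hx : b ≤ x) : invCutoff a b x = x⁻¹ := by
  rw [invCutoff, max_eq_left (by linarith), min_eq_left, max_eq_right zero_le_one, mul_one]
  rw [le_div_iff₀ (by linarith)]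
  linarith

theorem mul_rpow_neg_one_div_mul_invCutoff_bounds {t a b : ℝ} (ht : 0 < t)
    (hab : a < b) {c : ℝ} (hc : 0 ≤ c) (n : ℕ) :
    (n ∈ Finset.Ioc 0 ⌊Real.exp t⌋₊ → b ≤ Real.exp (-1) →
      c = c * (n : ℝ) ^ (-1 / t) * invCutoff a b ((n : ℝ) ^ (-1 / t))) ∧
    (n ∈ Finset.Ioc 0 ⌊Real.exp t⌋₊ →
      c * (n : ℝ) ^ (-1 / t) * invCutoff a b ((n : ℝ) ^ (-1 / t)) ≤ c) ∧
    (n ∉ Finset.Ioc 0 ⌊Real.exp t⌋₊ → Real.exp (-1) ≤ a →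
      c * (n : ℝ) ^ (-1 / t) * invCutoff a b ((n : ℝ) ^ (-1 / t)) = 0) := by
  rcases n.eq_zero_or_pos with rfl | hn
  · simp [Real.zero_rpow (div_neg_of_neg_of_pos neg_one_lt_zero ht).ne]
  have hn' : (0 : ℝ) < n := by exact_mod_cast hn
  have hx : 0 < (n : ℝ) ^ (-1 / t) := by positivity
  have hxe : (n : ℝ) ^ (-1 / t) = Real.exp (-(Real.log n / t)) := by
    rw [Real.rpow_def_of_pos hn']; congr 1; ring
  have hmem : n ∈ Finset.Ioc 0 ⌊Real.exp t⌋₊ ↔ Real.log n / t ≤ 1 := by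
    rw [Finset.mem_Ioc, Nat.le_floor_iff (Real.exp_pos _).le, div_le_one ht,
      Real.log_le_iff_le_exp hn']
    exact and_iff_right hn
  refine ⟨fun h hb => ?_, fun h => ?_, fun h hea => ?_⟩
  · rw [invCutoff_of_ge hab, mul_assoc, mul_inv_cancel₀ hx.ne', mul_one]
    rw [hxe]
    refine hb.trans (Real.exp_le_exp.2 ?_)
    linarith [hmem.1 h]
  · calc _ ≤ c * (n : ℝ) ^ (-1 / t) * ((n : ℝ) ^ (-1 / t))⁻¹ := by
          gcongr
          exact invCutoff_le hx
      _ = c := by rw [mul_assoc, mul_inv_cancel₀ hx.ne', mul_one]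
  · rw [invCutoff_of_le hab, mul_zero]
    rw [hxe]
    refine le_trans (Real.exp_le_exp.2 ?_) hea
    rw [hmem, not_le] at h
    linarith

open MeasureTheory in
theorem setIntegral_rpow_div_Gamma {θ v : ℝ} (hθ : 0 < θ) (hv : 0 ≤ v) :
    ∫ u in Set.Ioc 0 v, u ^ (θ - 1) / Real.Gamma θ = v ^ θ / Real.Gamma (θ + 1) := by
  rw [← intervalIntegral.integral_of_le hv, intervalIntegral.integral_div,
    integral_rpow (Or.inl (by linarith)), sub_add_cancel, Real.zero_rpow hθ.ne', sub_zero,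
    Real.Gamma_add_one hθ.ne', div_div]

open MeasureTheory in
/-- Karamata's Tauberian theorem for Dirichlet series with nonnegative coefficients. -/
theorem tendsto_sum_div_of_regularlyVarying {f : ℕ → ℝ} (hf : ∀ n, 0 ≤ f n) (hf1 : 0 < f 1)
    {θ : ℝ} (hθ : 0 < θ)
    (hsum : ∀ s : ℝ, 0 < s → Summable fun n : ℕ => f n * (n : ℝ) ^ (-s))
    (hreg : ∀ m : ℕ, Tendsto (fun t : ℝ => (∑' n : ℕ, f n * (n : ℝ) ^ (-((m + 1) / t))) /
      ∑' n : ℕ, f n * (n : ℝ) ^ (-(1 / t))) atTop (nhds (((m : ℝ) + 1) ^ (-θ)))) :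
    Tendsto (fun t : ℝ => (∑ n ∈ Finset.Ioc 0 ⌊Real.exp t⌋₊, f n) /
      ∑' n : ℕ, f n * (n : ℝ) ^ (-(1 / t))) atTop (nhds (1 / Real.Gamma (θ + 1))) := by
  set F : ℝ → ℝ := fun t => ∑' n : ℕ, f n * (n : ℝ) ^ (-(1 / t)) with hF
  have hFpos : ∀ t, 0 < t → 0 < F t := fun t ht =>
    (hsum (1 / t) (by positivity)).tsum_pos (fun n => mul_nonneg (hf n) (by positivity)) 1
      (by simpa using hf1)
  have hFnn : ∀ t, 0 ≤ F t := fun t => tsum_nonneg fun n => mul_nonneg (hf n) (by positivity)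
  have hG := Real.Gamma_pos_of_pos hθ
  set k : ℝ → ℝ := fun u => u ^ (θ - 1) * Real.exp (-u) / Real.Gamma θ with hk
  set x : ℝ → ℕ → ℝ := fun t n => if 0 < t then (n : ℝ) ^ (-1 / t) else 0 with hx
  set w : ℝ → ℕ → ℝ := fun t n => f n * (n : ℝ) ^ (-1 / t) / F t with hw
  have hkm : ∀ m : ℕ, ∫ u in Set.Ioi (0 : ℝ), k u * Real.exp (-u) ^ m = ((m : ℝ) + 1) ^ (-θ) := by
    intro m
    have h := Real.integral_rpow_mul_exp_neg_mul_Ioi hθ (by positivity : (0 : ℝ) < m + 1)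
    have e : ∀ u : ℝ, k u * Real.exp (-u) ^ m =
        (Real.Gamma θ)⁻¹ * (u ^ (θ - 1) * Real.exp (-((m + 1) * u))) := by
      intro u
      have : Real.exp (-((m + 1) * u)) = Real.exp (-u) * Real.exp (-u) ^ m := by
        rw [← Real.exp_nat_mul, ← Real.exp_add]
        congr 1
        ring
      rw [hk, this]
      ring
    simp_rw [e]
    rw [integral_const_mul, h, Real.rpow_neg (by positivity), one_div,
      Real.inv_rpow (by positivity)]
    field_simp
  have hkint : IntegrableOn k (Set.Ioi 0) := by
    have := (Real.GammaIntegral_convergent hθ).div_const (Real.Gamma θ)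
    refine this.congr (Eventually.of_forall fun u => ?_)
    simp only [hk]
    ring
  have hknn : ∀ u ∈ Set.Ioi (0 : ℝ), 0 ≤ k u := fun u hu => by
    have : 0 < u := hu
    positivity
  have hcont : ∀ g : ℝ → ℝ, Continuous g → Tendsto
      (fun t => (∑' n : ℕ, f n * (n : ℝ) ^ (-1 / t) * g ((n : ℝ) ^ (-1 / t))) / F t) atTop
      (nhds (∫ u in Set.Ioi (0 : ℝ), k u * g (Real.exp (-u)))) := by
    intro g hg
    refine (tendsto_tsum_mul_of_tendsto_moments (l := atTop) (w := w) (x := x) (k := k)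
      (y := fun u => Real.exp (-u)) (s := Set.Ioi 0) measurableSet_Ioi
      (fun t n => div_nonneg (mul_nonneg (hf n) (by positivity)) (hFnn t)) ?_ ?_ hknn hkint ?_
      (by fun_prop) (fun u hu => ⟨(Real.exp_pos _).le, Real.exp_le_one_iff.2 ?_⟩) ?_ hg).congr' ?_
    · filter_upwards [eventually_gt_atTop 0] with t ht
      have := ((hsum (1 / t) (by positivity)).hasSum.div_const (F t))
      change HasSum _ (F t / F t) at this
      rw [div_self (hFpos t ht).ne'] at this
      simp only [hw, neg_div]
      exact this
    · intro t n
      simp only [hx]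
      split_ifs with ht
      · refine ⟨by positivity, ?_⟩
        rcases n.eq_zero_or_pos with rfl | hn
        · rw [Nat.cast_zero, Real.zero_rpow (div_neg_of_neg_of_pos neg_one_lt_zero ht).ne]
          exact zero_le_one
        · exact Real.rpow_le_one_of_one_le_of_nonpos (by exact_mod_cast hn)
            (div_neg_of_neg_of_pos neg_one_lt_zero ht).le
      · simp
    · simpa using hkm 0
    · have : 0 < u := hu
      linarith
    · intro m
      rw [hkm]
      refine (hreg m).congr' ?_
      filter_upwards [eventually_gt_atTop 0] with t ht
      rw [← tsum_div_const]
      congr 1 with n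
      simp only [hx, hw, ht, if_true]
      have e : (n : ℝ) ^ (-((m + 1) / t)) = (n : ℝ) ^ (-1 / t) * ((n : ℝ) ^ (-1 / t)) ^ m := by
        rw [← pow_succ', ← Real.rpow_natCast, ← Real.rpow_mul (Nat.cast_nonneg n)]
        congr 1
        push_cast
        ring
      rw [e]
      ring
    · filter_upwards [eventually_gt_atTop 0] with t ht
      rw [← tsum_div_const]
      congr 1 with n
      simp only [hx, hw, ht, if_true]
      ring
  have hsummable : ∀ a b t : ℝ, 0 < a → 0 < t → Summable fun n : ℕ =>
      f n * (n : ℝ) ^ (-1 / t) * invCutoff a b ((n : ℝ) ^ (-1 / t)) := by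
    intro a b t ha ht
    refine Summable.of_nonneg_of_le (fun n => mul_nonneg (mul_nonneg (hf n) (by positivity))
      (invCutoff_nonneg ha)) (fun n => ?_) ((hsum (1 / t) (by positivity)).mul_right a⁻¹)
    rw [← neg_div]
    refine mul_le_mul_of_nonneg_left ?_ (mul_nonneg (hf n) (by positivity))
    unfold invCutoff
    calc _ ≤ a⁻¹ * 1 := by
          gcongr
          · exact le_max_right _ _
          · exact max_le zero_le_one (min_le_left _ _)
      _ = _ := mul_one _
  have hvint : ∀ v : ℝ, 0 ≤ v →
      IntegrableOn (fun u => u ^ (θ - 1) / Real.Gamma θ) (Set.Ioc 0 v) := fun v hv =>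
    ((intervalIntegrable_iff_integrableOn_Ioc_of_le hv).1
      (intervalIntegral.intervalIntegrable_rpow' (by linarith))).div_const _
  have hke : ∀ u, k u * (Real.exp (-u))⁻¹ = u ^ (θ - 1) / Real.Gamma θ := fun u => by
    simp only [hk]
    field_simp
  have hcint : ∀ a b : ℝ, 0 < a →
      IntegrableOn (fun u => k u * invCutoff a b (Real.exp (-u))) (Set.Ioi 0) := by
    intro a b ha
    refine Integrable.mul_bdd (c := a⁻¹) hkint ((continuous_invCutoff ha).comp
      (by fun_prop)).aestronglyMeasurable (Eventually.of_forall fun u => ?_)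
    rw [Real.norm_of_nonneg (invCutoff_nonneg ha)]
    unfold invCutoff
    calc _ ≤ a⁻¹ * 1 := by
          gcongr
          · exact le_max_right _ _
          · exact max_le zero_le_one (min_le_left _ _)
      _ = _ := mul_one _
  have hcv : Tendsto (fun v : ℝ => v ^ θ / Real.Gamma (θ + 1)) (nhds 1)
      (nhds (1 / Real.Gamma (θ + 1))) := by
    have := (Real.continuousAt_rpow_const 1 θ (Or.inl one_ne_zero)).tendsto.div_const
      (Real.Gamma (θ + 1))
    rwa [Real.one_rpow] at this
  rw [tendsto_order]
  constructor
  · intro L hL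
    obtain ⟨v, hv, hv1, hv0⟩ : ∃ v : ℝ, L < v ^ θ / Real.Gamma (θ + 1) ∧ v < 1 ∧ 0 < v := by
      have h := ((hcv.mono_left nhdsWithin_le_nhds).eventually_const_lt hL).and
        (Ioo_mem_nhdsLT (zero_lt_one' ℝ))
      obtain ⟨v, h1, h2⟩ := h.exists (f := nhdsWithin 1 (Set.Iio 1))
      exact ⟨v, h1, h2.2, h2.1⟩
    set a := Real.exp (-1)
    set b := Real.exp (-v)
    have ha : 0 < a := Real.exp_pos _
    have hab : a < b := Real.exp_lt_exp.2 (by linarith)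
    have hI : v ^ θ / Real.Gamma (θ + 1) ≤
        ∫ u in Set.Ioi (0 : ℝ), k u * invCutoff a b (Real.exp (-u)) := by
      rw [← setIntegral_rpow_div_Gamma hθ hv0.le]
      calc ∫ u in Set.Ioc 0 v, u ^ (θ - 1) / Real.Gamma θ
          = ∫ u in Set.Ioc 0 v, k u * invCutoff a b (Real.exp (-u)) := by
            refine setIntegral_congr_fun measurableSet_Ioc fun u hu => ?_
            rw [invCutoff_of_ge hab (Real.exp_le_exp.2 (by linarith [hu.2])), hke]
        _ ≤ _ := by
            refine setIntegral_mono_set (hcint a b ha) ?_ (Eventually.of_forall fun u hu => hu.1)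
            filter_upwards [ae_restrict_mem measurableSet_Ioi] with u hu
            exact mul_nonneg (hknn u hu) (invCutoff_nonneg ha)
    filter_upwards [(hcont _ (continuous_invCutoff ha)).eventually_const_lt (hv.trans_le hI),
      eventually_gt_atTop 0] with t h1 ht
    refine h1.trans_le (div_le_div_of_nonneg_right ?_ (hFnn t))
    rw [tsum_eq_sum (s := Finset.Ioc 0 ⌊Real.exp t⌋₊) fun n hn =>
      (mul_rpow_neg_one_div_mul_invCutoff_bounds ht hab (hf n) n).2.2 hn le_rfl]
    exact Finset.sum_le_sum fun n hn =>
      (mul_rpow_neg_one_div_mul_invCutoff_bounds ht hab (hf n) n).2.1 hn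
  · intro L hL
    obtain ⟨v, hv, hv1⟩ : ∃ v : ℝ, v ^ θ / Real.Gamma (θ + 1) < L ∧ 1 < v := by
      have h : ∀ᶠ v in nhdsWithin (1 : ℝ) (Set.Ioi 1), v ^ θ / Real.Gamma (θ + 1) < L ∧ 1 < v :=
        ((hcv.mono_left nhdsWithin_le_nhds).eventually_lt_const hL).and self_mem_nhdsWithin
      exact h.exists
    set a := Real.exp (-v)
    set b := Real.exp (-1)
    have ha : 0 < a := Real.exp_pos _
    have hab : a < b := Real.exp_lt_exp.2 (by linarith)
    have hI : ∫ u in Set.Ioi (0 : ℝ), k u * invCutoff a b (Real.exp (-u)) ≤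
        v ^ θ / Real.Gamma (θ + 1) := by
      rw [← setIntegral_rpow_div_Gamma hθ (by linarith)]
      calc ∫ u in Set.Ioi (0 : ℝ), k u * invCutoff a b (Real.exp (-u))
          = ∫ u in Set.Ioc 0 v, k u * invCutoff a b (Real.exp (-u)) := by
            refine setIntegral_eq_of_subset_of_forall_sdiff_eq_zero measurableSet_Ioi
              Set.Ioc_subset_Ioi_self fun u hu => ?_
            rw [invCutoff_of_le hab, mul_zero]
            have : v < u := by
              by_contra! h
              exact hu.2 ⟨hu.1, h⟩
            exact Real.exp_le_exp.2 (by linarith)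
        _ ≤ _ := by
            refine setIntegral_mono_on ((hcint a b ha).mono_set Set.Ioc_subset_Ioi_self)
              (hvint v (by linarith)) measurableSet_Ioc fun u hu => ?_
            rw [← hke]
            exact mul_le_mul_of_nonneg_left (invCutoff_le (Real.exp_pos _)) (hknn u hu.1)
    filter_upwards [(hcont _ (continuous_invCutoff ha)).eventually_lt_const (hI.trans_lt hv),
      eventually_gt_atTop 0] with t h1 ht
    refine lt_of_le_of_lt ?_ h1
    have : ∑ n ∈ Finset.Ioc 0 ⌊Real.exp t⌋₊, f n =
        ∑ n ∈ Finset.Ioc 0 ⌊Real.exp t⌋₊,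
          f n * (n : ℝ) ^ (-1 / t) * invCutoff a b ((n : ℝ) ^ (-1 / t)) :=
      Finset.sum_congr rfl fun n hn =>
        (mul_rpow_neg_one_div_mul_invCutoff_bounds ht hab (hf n) n).1 hn le_rfl
    rw [this]
    have := hFpos t ht
    gcongr
    exact (hsummable a b t ha ht).sum_le_tsum _ fun n _ =>
      mul_nonneg (mul_nonneg (hf n) (by positivity)) (invCutoff_nonneg ha)

/-- The logarithm of an Euler product with nonnegative terms, without a priori summability. -/
theorem summable_and_tsum_eq_exp_tsum {h : ℕ → ℝ} (hnn : ∀ n, 0 ≤ h n) (h0 : h 0 = 0) (h1 : h 1 = 1)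
    (hmul : ∀ {m n : ℕ}, m.Coprime n → h (m * n) = h m * h n) {a : ℕ → ℝ} (ha0 : ∀ p, 0 ≤ a p)
    (ha : Summable a) (han : ∀ p, ¬ p.Prime → a p = 0)
    (hloc : ∀ p, p.Prime → HasSum (fun e => h (p ^ e)) (Real.exp (a p))) :
    Summable h ∧ ∑' n, h n = Real.exp (∑' p, a p) := by
  have hnorm : (fun n => ‖h n‖) = h := funext fun n => Real.norm_of_nonneg (hnn n)
  have hprod : ∀ N : ℕ, ∏ p ∈ N.primesBelow, ∑' e, h (p ^ e) =
      Real.exp (∑ p ∈ Finset.range N, a p) := by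
    intro N
    rw [Real.exp_sum, Nat.primesBelow, Finset.prod_filter]
    refine Finset.prod_congr rfl fun p _ => ?_
    split_ifs with hp
    · exact (hloc p hp).tsum_eq
    · rw [han p hp, Real.exp_zero]
  have hsum : Summable h := by
    refine summable_of_sum_range_le (c := Real.exp (∑' p, a p)) hnn fun N => ?_
    obtain ⟨hs, hs'⟩ := EulerProduct.summable_and_hasSum_smoothNumbers_prod_primesBelow_tsum h1
      hmul (fun {p} hp => (hloc p hp).summable.norm) N
    rw [hprod] at hs'
    calc ∑ n ∈ Finset.range N, h n
        = ∑ n ∈ Finset.range N, (N.smoothNumbers).indicator h n := by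
          refine Finset.sum_congr rfl fun n hn => ?_
          rcases n.eq_zero_or_pos with rfl | hn0
          · rw [h0]
            exact (Set.indicator_apply_eq_zero.2 fun _ => h0).symm
          · rw [Set.indicator_of_mem (Nat.mem_smoothNumbers_of_lt hn0 (Finset.mem_range.1 hn))]
      _ ≤ ∑' n, (N.smoothNumbers).indicator h n :=
          (summable_subtype_iff_indicator.1 hs'.summable).sum_le_tsum _ fun n _ =>
            Set.indicator_nonneg (fun n _ => hnn n) n
      _ = Real.exp (∑ p ∈ Finset.range N, a p) := by
          rw [← tsum_subtype]
          exact hs'.tsum_eq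
      _ ≤ Real.exp (∑' p, a p) := Real.exp_le_exp.2 (ha.sum_le_tsum _ fun p _ => ha0 p)
  refine ⟨hsum, ?_⟩
  have h2 := EulerProduct.eulerProduct h1 hmul (by rwa [hnorm]) h0
  simp_rw [hprod] at h2
  exact tendsto_nhds_unique h2
    ((Real.continuous_exp.tendsto _).comp ha.hasSum.tendsto_sum_nat)

/-- The summand of the `k`-free sum over integers composed of primes from `A`. -/
noncomputable def phiWeight (k : ℕ) (A : Set ℕ) (n : ℕ) : ℝ :=
  if (∀ p : ℕ, p.Prime → p ∣ n → p ∈ A) ∧ KFree k n then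
    (1 : ℝ) / ((freePart (k - 1) n * Nat.totient (powerPart (k - 1) n) : ℕ) : ℝ)
  else 0

theorem phiWeight_nonneg (k : ℕ) (A : Set ℕ) (n : ℕ) : 0 ≤ phiWeight k A n := by
  unfold phiWeight
  split_ifs <;> positivity

theorem phiWeight_zero (k : ℕ) (A : Set ℕ) : phiWeight k A 0 = 0 :=
  if_neg fun h => h.2 2 Nat.prime_two (dvd_zero _)

theorem phiWeight_one {k : ℕ} (hk : k ≠ 0) (A : Set ℕ) : phiWeight k A 1 = 1 := by
  rw [phiWeight, if_pos]
  · simp [freePart, powerPart]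
  · refine ⟨fun p hp h => absurd (Nat.dvd_one.1 h) hp.ne_one, fun p hp h => ?_⟩
    exact hp.ne_one ((Nat.pow_eq_one.1 (Nat.dvd_one.1 h)).resolve_right hk)

theorem freePart_mul_powerPart (m : ℕ) {n : ℕ} (hn : n ≠ 0) :
    freePart m n * powerPart m n = n := by
  rw [freePart, powerPart, ← Finsupp.prod_mul]
  conv_rhs => rw [← Nat.prod_factorization_pow_eq_self hn]
  refine Finsupp.prod_congr fun p _ => ?_
  rw [← pow_add, Nat.mod_add_div]

theorem freePart_mul (k : ℕ) {m n : ℕ} (h : m.Coprime n) :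
    freePart k (m * n) = freePart k m * freePart k n := by
  rw [freePart, Nat.factorization_mul_of_coprime h,
    Finsupp.prod_add_index_of_disjoint h.disjoint_primeFactors]
  rfl

theorem powerPart_mul (k : ℕ) {m n : ℕ} (h : m.Coprime n) :
    powerPart k (m * n) = powerPart k m * powerPart k n := by
  rw [powerPart, Nat.factorization_mul_of_coprime h,
    Finsupp.prod_add_index_of_disjoint h.disjoint_primeFactors]
  rfl

theorem phiWeight_mul {k : ℕ} (hk : k ≠ 0) (A : Set ℕ) {m n : ℕ} (h : m.Coprime n) :
    phiWeight k A (m * n) = phiWeight k A m * phiWeight k A n := by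
  rcases eq_or_ne m 0 with rfl | hm
  · rw [zero_mul, phiWeight_zero, zero_mul]
  rcases eq_or_ne n 0 with rfl | hn
  · rw [mul_zero, phiWeight_zero, mul_zero]
  have hiff : ((∀ p : ℕ, p.Prime → p ∣ m * n → p ∈ A) ∧ KFree k (m * n)) ↔
      ((∀ p : ℕ, p.Prime → p ∣ m → p ∈ A) ∧ KFree k m) ∧
        ((∀ p : ℕ, p.Prime → p ∣ n → p ∈ A) ∧ KFree k n) := by
    have h1 : (∀ p : ℕ, p.Prime → p ∣ m * n → p ∈ A) ↔
        (∀ p : ℕ, p.Prime → p ∣ m → p ∈ A) ∧ (∀ p : ℕ, p.Prime → p ∣ n → p ∈ A) := by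
      refine ⟨fun H => ⟨fun p hp hd => H p hp (hd.mul_right _),
        fun p hp hd => H p hp (hd.mul_left _)⟩, fun H p hp hd => ?_⟩
      exact (hp.dvd_mul.1 hd).elim (H.1 p hp) (H.2 p hp)
    have h2 : KFree k (m * n) ↔ KFree k m ∧ KFree k n := by
      refine ⟨fun H => ⟨fun p hp hd => H p hp (hd.mul_right _),
        fun p hp hd => H p hp (hd.mul_left _)⟩, fun H p hp hd => ?_⟩
      exact ((h.isPrimePow_dvd_mul (hp.isPrimePow.pow hk)).1 hd).elim (H.1 p hp) (H.2 p hp)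
    rw [h1, h2]
    tauto
  have hc : (powerPart (k - 1) m).Coprime (powerPart (k - 1) n) :=
    (h.coprime_dvd_left ⟨_, (freePart_mul_powerPart (k - 1) hm).symm.trans (mul_comm _ _)⟩).coprime_dvd_right
      ⟨_, (freePart_mul_powerPart (k - 1) hn).symm.trans (mul_comm _ _)⟩
  unfold phiWeight
  simp only [hiff]
  by_cases hm' : (∀ p : ℕ, p.Prime → p ∣ m → p ∈ A) ∧ KFree k m
  · by_cases hn' : (∀ p : ℕ, p.Prime → p ∣ n → p ∈ A) ∧ KFree k n
    · rw [if_pos ⟨hm', hn'⟩, if_pos hm', if_pos hn', freePart_mul _ h, powerPart_mul _ h,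
        Nat.totient_mul hc, one_div_mul_one_div, ← Nat.cast_mul]
      congr 2
      ring
    · rw [if_neg (fun h => hn' h.2), if_neg hn', mul_zero]
  · rw [if_neg (fun h => hm' h.1), if_neg hm', zero_mul]

theorem phiWeight_prime_pow_of_notMem (k : ℕ) {A : Set ℕ} {p : ℕ} (hp : p.Prime) (hpA : p ∉ A)
    {e : ℕ} (he : e ≠ 0) : phiWeight k A (p ^ e) = 0 :=
  if_neg fun h => hpA (h.1 p hp (dvd_pow_self p he))

theorem phiWeight_prime_pow_of_le {k : ℕ} (A : Set ℕ) {p : ℕ} (hp : p.Prime) {e : ℕ}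
    (he : k ≤ e) : phiWeight k A (p ^ e) = 0 :=
  if_neg fun h => h.2 p hp (pow_dvd_pow p he)

theorem phiWeight_prime_pow {k : ℕ} {A : Set ℕ} {p : ℕ} (hp : p.Prime) (hpA : p ∈ A)
    {e : ℕ} (he : e < k) : phiWeight k A (p ^ e) =
      1 / ((p ^ (e % (k - 1)) * Nat.totient (p ^ ((k - 1) * (e / (k - 1)))) : ℕ) : ℝ) := by
  rw [phiWeight, if_pos]
  · rw [freePart, powerPart, hp.factorization_pow, Finsupp.prod_single_index (by simp),
      Finsupp.prod_single_index (by simp)]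
  · refine ⟨fun q hq hd => ?_, fun q hq hd => ?_⟩
    · rwa [(Nat.prime_dvd_prime_iff_eq hq hp).1 (hq.dvd_of_dvd_pow hd)]
    · have hqp := (Nat.prime_dvd_prime_iff_eq hq hp).1
        (hq.dvd_of_dvd_pow ((dvd_pow_self q (by omega)).trans hd))
      rw [hqp, Nat.pow_dvd_pow_iff_le_right hp.one_lt] at hd
      omega

theorem phiWeight_prime_pow_of_lt {k : ℕ} {A : Set ℕ} {p : ℕ} (hp : p.Prime) (hpA : p ∈ A)
    {e : ℕ} (he : e + 1 < k) : phiWeight k A (p ^ e) = (1 / (p : ℝ)) ^ e := by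
  rw [phiWeight_prime_pow hp hpA (by omega), Nat.mod_eq_of_lt (by omega),
    Nat.div_eq_of_lt (by omega)]
  simp

theorem phiWeight_prime_pow_self {k : ℕ} {A : Set ℕ} {p : ℕ} (hp : p.Prime) (hpA : p ∈ A) :
    phiWeight (k + 2) A (p ^ (k + 1)) = (1 / (p : ℝ)) ^ (k + 1) * (1 - 1 / (p : ℝ))⁻¹ := by
  have hp1 : (1 : ℝ) < p := by exact_mod_cast hp.one_lt
  rw [phiWeight_prime_pow hp hpA (by omega), show k + 2 - 1 = k + 1 from rfl, Nat.mod_self,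
    Nat.div_self (by omega), mul_one, pow_zero, one_mul,
    Nat.totient_prime_pow_succ hp]
  push_cast [hp.one_le]
  have : (p : ℝ) - 1 ≠ 0 := by linarith
  have : (p : ℝ) ≠ 0 := by linarith
  field_simp
  rw [one_div, inv_pow, ← pow_succ, mul_inv_cancel₀ (by positivity)]

theorem sum_phiWeight_prime_pow {k : ℕ} (hk : 2 ≤ k) {A : Set ℕ} {p : ℕ} (hp : p.Prime)
    (hpA : p ∈ A) : ∑ e ∈ Finset.range k, phiWeight k A (p ^ e) = (1 - 1 / (p : ℝ))⁻¹ := by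
  have hp1 : (1 : ℝ) < p := by exact_mod_cast hp.one_lt
  obtain ⟨k, rfl⟩ := Nat.exists_eq_add_of_le' hk
  rw [Finset.sum_range_succ, phiWeight_prime_pow_self hp hpA,
    Finset.sum_congr rfl fun e he => phiWeight_prime_pow_of_lt hp hpA
      (by have := Finset.mem_range.1 he; omega)]
  have h1 : 1 / (p : ℝ) < 1 := by rwa [div_lt_one (by linarith)]
  rw [geom_sum_eq h1.ne]
  have : 1 - 1 / (p : ℝ) ≠ 0 := by linarith
  have : 1 / (p : ℝ) - 1 ≠ 0 := by linarith
  generalize 1 / (p : ℝ) = x at *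
  field_simp
  ring

theorem one_div_le_phiWeight_prime {k : ℕ} (hk : 2 ≤ k) {A : Set ℕ} {p : ℕ} (hp : p.Prime)
    (hpA : p ∈ A) : 1 / (p : ℝ) ≤ phiWeight k A p := by
  have hp1 : (1 : ℝ) < p := by exact_mod_cast hp.one_lt
  obtain ⟨k, rfl⟩ := Nat.exists_eq_add_of_le' hk
  rcases k.eq_zero_or_pos with rfl | hk
  · have h := phiWeight_prime_pow_self (k := 0) hp hpA
    rw [zero_add, zero_add, pow_one, pow_one] at h
    rw [zero_add, h]
    have h1 : 1 / (p : ℝ) < 1 := by rwa [div_lt_one (by linarith)]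
    refine le_mul_of_one_le_right (by positivity) ((one_le_inv₀ (by linarith)).2 ?_)
    have : 0 < 1 / (p : ℝ) := by positivity
    linarith
  · have h := phiWeight_prime_pow_of_lt (k := k + 2) hp hpA (e := 1) (by omega)
    rw [pow_one, pow_one] at h
    exact h.ge

/-- The factor at `p` of the Euler product of the Dirichlet series of `phiWeight k A`. -/
noncomputable def phiFactor (k : ℕ) (A : Set ℕ) (s : ℝ) (p : ℕ) : ℝ :=
  ∑ e ∈ Finset.range k, phiWeight k A (p ^ e) * ((p : ℝ) ^ (-s)) ^ e

theorem hasSum_phiFactor (k : ℕ) (A : Set ℕ) (s : ℝ) {p : ℕ} (hp : p.Prime) :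
    HasSum (fun e => phiWeight k A (p ^ e) * ((p ^ e : ℕ) : ℝ) ^ (-s)) (phiFactor k A s p) := by
  have e : ∀ e : ℕ, ((p ^ e : ℕ) : ℝ) ^ (-s) = ((p : ℝ) ^ (-s)) ^ e := fun e => by
    rw [Nat.cast_pow, ← Real.rpow_natCast, ← Real.rpow_mul (Nat.cast_nonneg p), mul_comm,
      Real.rpow_mul (Nat.cast_nonneg p), Real.rpow_natCast]
  simp_rw [e]
  refine hasSum_sum_of_ne_finset_zero fun n hn => ?_
  rw [phiWeight_prime_pow_of_le A hp (by simpa using hn), zero_mul]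

theorem phiFactor_of_notMem {k : ℕ} (hk : k ≠ 0) {A : Set ℕ} (s : ℝ) {p : ℕ} (hp : p.Prime)
    (hpA : p ∉ A) : phiFactor k A s p = 1 := by
  obtain ⟨k, rfl⟩ := Nat.exists_eq_succ_of_ne_zero hk
  rw [phiFactor, Finset.sum_range_succ', Finset.sum_eq_zero fun e _ => by
    rw [phiWeight_prime_pow_of_notMem _ hp hpA e.succ_ne_zero, zero_mul]]
  rw [pow_zero, pow_zero, phiWeight_one hk, zero_add, mul_one]

theorem phiFactor_zero {k : ℕ} (hk : 2 ≤ k) {A : Set ℕ} {p : ℕ} (hp : p.Prime) (hpA : p ∈ A) :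
    phiFactor k A 0 p = (1 - 1 / (p : ℝ))⁻¹ := by
  rw [← sum_phiWeight_prime_pow hk hp hpA, phiFactor]
  simp

theorem phiFactor_bounds {k : ℕ} (hk : 2 ≤ k) {A : Set ℕ} {s : ℝ} (hs : 0 ≤ s) {p : ℕ}
    (hp : p.Prime) (hpA : p ∈ A) :
    1 + (p : ℝ) ^ (-1 - s) ≤ phiFactor k A s p ∧
      phiFactor k A s p ≤ 1 + (p : ℝ) ^ (-1 - s) + 2 / (p : ℝ) ^ 2 := by
  have hp2 : (2 : ℝ) ≤ p := by exact_mod_cast hp.two_le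
  have hsum := sum_phiWeight_prime_pow hk hp hpA
  have hle := one_div_le_phiWeight_prime hk hp hpA
  have hz : (p : ℝ) ^ (-1 - s) = 1 / p * (p : ℝ) ^ (-s) := by
    rw [sub_eq_add_neg, Real.rpow_add (by linarith), Real.rpow_neg_one, one_div]
  rw [hz, phiFactor]
  have hz0 : 0 ≤ (p : ℝ) ^ (-s) := by positivity
  have hz1 : (p : ℝ) ^ (-s) ≤ 1 :=
    Real.rpow_le_one_of_one_le_of_nonpos (by linarith) (by linarith)
  generalize (p : ℝ) ^ (-s) = z at *
  have h1 := phiWeight_one (k := k) (by omega) A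
  have hnn := phiWeight_nonneg k A
  have hterm : ∀ e, phiWeight k A (p ^ e) * z ^ e ≤ phiWeight k A (p ^ e) := fun e =>
    mul_le_of_le_one_right (hnn _) (pow_le_one₀ hz0 hz1)
  obtain ⟨K, hK⟩ := Nat.exists_eq_add_of_le' hk
  have hsplit : ∀ g : ℕ → ℝ, ∑ e ∈ Finset.range k, g e =
      ∑ e ∈ Finset.range K, g (e + 2) + g 1 + g 0 := fun g => by
    rw [hK, Finset.sum_range_succ', Finset.sum_range_succ']
  rw [hsplit] at hsum ⊢
  simp only [pow_zero, pow_one, h1, mul_one] at hsum ⊢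
  have hub : (1 - 1 / (p : ℝ))⁻¹ - 1 - 1 / p ≤ 2 / (p : ℝ) ^ 2 := by
    have e : (1 - 1 / (p : ℝ))⁻¹ - 1 - 1 / p = 1 / (p * (p - 1)) := by
      have : (p : ℝ) - 1 ≠ 0 := by linarith
      have : (p : ℝ) ≠ 0 := by linarith
      field_simp
      ring
    rw [e, div_le_div_iff₀ (mul_pos (by linarith) (by linarith)) (by positivity)]
    nlinarith
  have h3 : 0 ≤ ∑ e ∈ Finset.range K, phiWeight k A (p ^ (e + 2)) * z ^ (e + 2) :=
    Finset.sum_nonneg fun e _ => mul_nonneg (hnn _) (by positivity)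
  have h4 : ∑ e ∈ Finset.range K, phiWeight k A (p ^ (e + 2)) * z ^ (e + 2) ≤
      ∑ e ∈ Finset.range K, phiWeight k A (p ^ (e + 2)) := Finset.sum_le_sum fun e _ => hterm _
  have h5 : 0 ≤ (phiWeight k A p - 1 / p) * z := mul_nonneg (by linarith) hz0
  have h6 : (phiWeight k A p - 1 / p) * z ≤ phiWeight k A p - 1 / p :=
    mul_le_of_le_one_right (by linarith) hz1
  constructor <;> linarith

/-- The logarithm of `phiFactor k A s p` minus its leading term `p ^ (-1 - s)`, for `p ∈ A`. -/
noncomputable def eulerError (k : ℕ) (A : Set ℕ) (s : ℝ) : ℕ → ℝ :=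
  A.indicator fun p => Real.log (phiFactor k A s p) - (p : ℝ) ^ (-1 - s)

theorem norm_eulerError_le {k : ℕ} (hk : 2 ≤ k) {A : Set ℕ} (hA : ∀ p ∈ A, p.Prime) {s : ℝ}
    (hs : 0 ≤ s) (p : ℕ) : ‖eulerError k A s p‖ ≤ 2 / (p : ℝ) ^ 2 := by
  by_cases hpA : p ∈ A
  · have hp := hA p hpA
    have hp2 : (2 : ℝ) ≤ p := by exact_mod_cast hp.two_le
    rw [eulerError, Set.indicator_of_mem hpA, Real.norm_eq_abs]
    obtain ⟨h1, h2⟩ := phiFactor_bounds hk hs hp hpA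
    have hy0 : 0 ≤ (p : ℝ) ^ (-1 - s) := by positivity
    have hy1 : (p : ℝ) ^ (-1 - s) ≤ 1 / p := by
      rw [one_div, ← Real.rpow_neg_one]
      exact Real.rpow_le_rpow_of_exponent_le (by linarith) (by linarith)
    have hp2' : 1 / (p : ℝ) ^ 2 = (1 / p) ^ 2 := by rw [one_div_pow]
    have hpp : 2 / (p : ℝ) ^ 2 = 2 * (1 / p) ^ 2 := by rw [← hp2']; ring
    generalize (p : ℝ) ^ (-1 - s) = y at *
    generalize phiFactor k A s p = g at *
    have hg : 0 < g := by linarith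
    have hlog1 := Real.log_le_sub_one_of_pos hg
    have hlog2 : Real.log (1 + y) ≤ Real.log g := Real.log_le_log (by linarith) h1
    have hlog3 := Real.one_sub_inv_le_log_of_pos (show 0 < 1 + y by linarith)
    have hinv : (1 + y)⁻¹ ≤ 1 - y + y ^ 2 := by
      rw [inv_le_iff_one_le_mul₀ (by linarith)]
      nlinarith [pow_nonneg hy0 3]
    have hy2 : y ^ 2 ≤ (1 / (p : ℝ)) ^ 2 := by gcongr
    have := sq_nonneg (1 / (p : ℝ))
    rw [abs_le]
    constructor <;> linarith
  · rw [eulerError, Set.indicator_of_notMem hpA, norm_zero]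
    positivity

theorem summable_two_div_sq : Summable fun p : ℕ => 2 / (p : ℝ) ^ 2 := by
  simpa [div_eq_mul_inv] using (Real.summable_nat_pow_inv.2 one_lt_two).mul_left (2 : ℝ)

theorem tendsto_tsum_eulerError {k : ℕ} (hk : 2 ≤ k) {A : Set ℕ} (hA : ∀ p ∈ A, p.Prime) :
    Tendsto (fun t : ℝ => ∑' p, eulerError k A (1 / t) p) atTop
      (nhds (∑' p, eulerError k A 0 p)) := by
  refine tendsto_tsum_of_dominated_convergence summable_two_div_sq (fun p => ?_) ?_
  · by_cases hpA : p ∈ A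
    · simp only [eulerError, Set.indicator_of_mem hpA]
      have hp := hA p hpA
      have hp0 : (p : ℝ) ≠ 0 := by exact_mod_cast hp.ne_zero
      have hpos : 0 < phiFactor k A 0 p :=
        lt_of_lt_of_le (by positivity) (phiFactor_bounds hk le_rfl hp hpA).1
      have hc : ContinuousAt
          (fun s => Real.log (phiFactor k A s p) - (p : ℝ) ^ (-1 - s)) 0 := by
        refine ContinuousAt.sub (ContinuousAt.log ?_ hpos.ne') ?_
        · unfold phiFactor
          refine Continuous.continuousAt (continuous_finsetSum _ fun e _ => ?_)
          exact continuous_const.mul ((continuous_const.rpow continuous_neg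
            fun _ => Or.inl hp0).pow e)
        · exact (continuous_const.rpow (continuous_const.sub continuous_id)
            fun _ => Or.inl hp0).continuousAt
      refine hc.tendsto.comp ?_
      exact tendsto_const_nhds.div_atTop tendsto_id
    · simp only [eulerError, Set.indicator_of_notMem hpA]
      exact tendsto_const_nhds
  · filter_upwards [eventually_ge_atTop 0] with t ht p
    exact norm_eulerError_le hk hA (by positivity) p

theorem summable_and_tsum_phiWeight_mul_rpow {k : ℕ} (hk : 2 ≤ k) {A : Set ℕ}
    (hA : ∀ p ∈ A, p.Prime) {t : ℝ} (ht : 0 < t) :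
    (Summable fun n : ℕ => phiWeight k A n * (n : ℝ) ^ (-(1 / t))) ∧
      ∑' n : ℕ, phiWeight k A n * (n : ℝ) ^ (-(1 / t)) =
        Real.exp (∑' p, A.indicator (fun p : ℕ => (p : ℝ) ^ (-1 - 1 / t)) p +
          ∑' p, eulerError k A (1 / t) p) := by
  have hs : 0 ≤ 1 / t := by positivity
  have hQ := (hasSum_rpow_integral_expRecipSum hA ht).summable
  have hE : Summable (eulerError k A (1 / t)) :=
    Summable.of_norm_bounded summable_two_div_sq (norm_eulerError_le hk hA hs)
  have ha : ∀ p, A.indicator (fun p : ℕ => (p : ℝ) ^ (-1 - 1 / t)) p + eulerError k A (1 / t) p =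
      A.indicator (fun p => Real.log (phiFactor k A (1 / t) p)) p := fun p => by
    by_cases hpA : p ∈ A
    · simp only [eulerError, Set.indicator_of_mem hpA]
      ring
    · simp only [eulerError, Set.indicator_of_notMem hpA, add_zero]
  have hone : ∀ p ∈ A, 1 ≤ phiFactor k A (1 / t) p := fun p hpA => by
    have := (phiFactor_bounds hk hs (hA p hpA) hpA).1
    have : 0 ≤ (p : ℝ) ^ (-1 - 1 / t) := by positivity
    linarith
  rw [← hQ.tsum_add hE]
  refine summable_and_tsum_eq_exp_tsum
    (fun n => mul_nonneg (phiWeight_nonneg k A n) (by positivity)) ?_ ?_ ?_ (fun p => ?_)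
    (hQ.add hE) (fun p hp => ?_) fun p hp => ?_
  · rw [phiWeight_zero, zero_mul]
  · rw [phiWeight_one (by omega), Nat.cast_one, Real.one_rpow, mul_one]
  · intro m n h
    rw [phiWeight_mul (by omega) A h, Nat.cast_mul,
      Real.mul_rpow (Nat.cast_nonneg m) (Nat.cast_nonneg n)]
    ring
  · rw [ha]
    exact Set.indicator_nonneg (fun p hpA => Real.log_nonneg (hone p hpA)) p
  · rw [ha, Set.indicator_of_notMem fun hpA => hp (hA p hpA)]
  · rw [ha]
    convert hasSum_phiFactor k A (1 / t) hp using 1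
    by_cases hpA : p ∈ A
    · rw [Set.indicator_of_mem hpA, Real.exp_log (by linarith [hone p hpA])]
    · rw [Set.indicator_of_notMem hpA, Real.exp_zero, phiFactor_of_notMem (by omega) _ hp hpA]

theorem harmSum_eq_prod (A : Set ℕ) (hA : ∀ p ∈ A, p.Prime) (N : ℕ) :
    harmSum (fun p => p ≤ N ∧ p ∈ A) =
      ∏ p ∈ Finset.Ioc 0 N with p ∈ A, (1 - 1 / (p : ℝ))⁻¹ := by
  let f : ℕ →* ℝ :=
    { toFun := fun n => 1 / (n : ℝ)
      map_one' := by simp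
      map_mul' := fun m n => by rw [Nat.cast_mul, one_div_mul_one_div] }
  have hf : ∀ {p : ℕ}, p.Prime → ‖f p‖ < 1 := fun {p} hp => by
    have hp1 : (1 : ℝ) < p := by exact_mod_cast hp.one_lt
    change ‖1 / (p : ℝ)‖ < 1
    rw [Real.norm_of_nonneg (by positivity)]
    exact (div_lt_one (by linarith)).2 hp1
  set s : Finset ℕ := {p ∈ Finset.Ioc 0 N | p ∈ A} with hs
  have h := (EulerProduct.summable_and_hasSum_factoredNumbers_prod_filter_prime_geometric hf s).2
  have hset : {n : ℕ | 0 < n ∧ ∀ p : ℕ, p.Prime → p ∣ n → p ≤ N ∧ p ∈ A} =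
      Nat.factoredNumbers s := by
    ext n
    rw [Set.mem_ofPred_eq, Nat.mem_factoredNumbers_iff_forall_le]
    refine ⟨fun H => ⟨H.1.ne', fun p _ hp hd => ?_⟩, fun H => ⟨Nat.pos_of_ne_zero H.1,
      fun p hp hd => ?_⟩⟩
    · have := H.2 p hp hd
      simp [hs, this, hp.pos]
    · have := H.2 p (Nat.le_of_dvd (Nat.pos_of_ne_zero H.1) hd) hp hd
      simp only [hs, Finset.mem_filter, Finset.mem_Ioc] at this
      exact ⟨this.1.2, this.2⟩
  have h2 := tsum_congr_set_coe (fun n : ℕ => 1 / (n : ℝ)) hset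
  rw [Finset.filter_true_of_mem fun p hp => hA p (Finset.mem_filter.1 hp).2] at h
  exact h2.trans h.tsum_eq

theorem harmSum_eq_exp {k : ℕ} (hk : 2 ≤ k) (A : Set ℕ) (hA : ∀ p ∈ A, p.Prime) (N : ℕ) :
    harmSum (fun p => p ≤ N ∧ p ∈ A) =
      Real.exp (recipSum A N + ∑ p ∈ Finset.Ioc 0 N, eulerError k A 0 p) := by
  rw [harmSum_eq_prod A hA, Finset.prod_filter, recipSum, ← Finset.sum_add_distrib, Real.exp_sum]
  refine Finset.prod_congr rfl fun p _ => ?_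
  by_cases hpA : p ∈ A
  · have hp := hA p hpA
    have hp1 : (1 : ℝ) < p := by exact_mod_cast hp.one_lt
    have hlt : 1 / (p : ℝ) < 1 := (div_lt_one (by linarith)).2 hp1
    rw [if_pos hpA, eulerError, Set.indicator_of_mem hpA, Set.indicator_of_mem hpA,
      phiFactor_zero hk hp hpA, sub_zero, Real.rpow_neg_one, one_div, add_sub_cancel,
      Real.exp_log (inv_pos.2 (by rw [one_div] at hlt; linarith))]
  · rw [if_neg hpA, eulerError, Set.indicator_of_notMem hpA, Set.indicator_of_notMem hpA,
      add_zero, Real.exp_zero]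

theorem tendsto_sum_Ioc_of_summable {a : ℕ → ℝ} (ha : Summable a) (h0 : a 0 = 0) :
    Tendsto (fun N : ℕ => ∑ p ∈ Finset.Ioc 0 N, a p) atTop (nhds (∑' p, a p)) := by
  refine ((tendsto_add_atTop_iff_nat 1).2 ha.hasSum.tendsto_sum_nat).congr fun N => ?_
  refine (Finset.sum_subset (fun p hp => ?_) fun p hp hp' => ?_).symm
  · simp only [Finset.mem_Ioc, Finset.mem_range] at hp ⊢
    omega
  · simp only [Finset.mem_Ioc, Finset.mem_range] at hp hp'
    rw [show p = 0 by omega, h0]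

/-- **Theorem 3.** For `k ≥ 2` and a set `A` of primes with natural density `θ ∈ (0,1]` within
the primes, the ratio of the harmonic sum over integers whose prime factors are `≤ N` and lie
in `A` to the sum over `k`-free `n ≤ N` with prime factors in `A` of
`1 / (n_{(k-1)-free} · φ(n_{(k-1)-power}))` tends to `e^{γθ} Γ(θ+1)`. -/
theorem generalized_phi_mertens
    (k : ℕ) (hk : 2 ≤ k)
    (A : Set ℕ) (hA : ∀ p ∈ A, Nat.Prime p)
    (θ : ℝ) (hθ : θ ∈ Set.Ioc (0 : ℝ) 1)
    (hdens : Tendsto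
      (fun N : ℕ => ((A ∩ Set.Icc 1 N).ncard : ℝ) / (({p : ℕ | Nat.Prime p} ∩ Set.Icc 1 N).ncard : ℝ))
      atTop (nhds θ)) :
    Tendsto
      (fun N : ℕ =>
        harmSum (fun p => p ≤ N ∧ p ∈ A) /
        ∑ n ∈ Finset.Icc 1 N,
          if (∀ p : ℕ, p.Prime → p ∣ n → p ∈ A) ∧ KFree k n then
            (1 : ℝ) / ((freePart (k - 1) n * Nat.totient (powerPart (k - 1) n) : ℕ) : ℝ)
          else 0)
      atTop
      (nhds (Real.exp (Real.eulerMascheroniConstant * θ) * Real.Gamma (θ + 1))) := by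
  set F : ℝ → ℝ := fun t => ∑' n : ℕ, phiWeight k A n * (n : ℝ) ^ (-(1 / t)) with hF
  set E₀ := ∑' p, eulerError k A 0 p with hE₀
  set D : ℝ → ℝ := fun t =>
    (∑' p, A.indicator (fun p : ℕ => (p : ℝ) ^ (-1 - 1 / t)) p - expRecipSum A t) +
      ∑' p, eulerError k A (1 / t) p with hD
  have hDlim : Tendsto D atTop (nhds (-(Real.eulerMascheroniConstant * θ) + E₀)) :=
    (tendsto_tsum_rpow_sub_expRecipSum hA hdens).add (tendsto_tsum_eulerError hk hA)
  have hFexp : ∀ t, 0 < t → F t = Real.exp (expRecipSum A t + D t) := fun t ht => by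
    rw [hF, hD]
    simp only
    rw [(summable_and_tsum_phiWeight_mul_rpow hk hA ht).2]
    congr 1
    ring
  have hreg : ∀ m : ℕ, Tendsto
      (fun t : ℝ => (∑' n : ℕ, phiWeight k A n * (n : ℝ) ^ (-((m + 1) / t))) / F t) atTop
      (nhds (((m : ℝ) + 1) ^ (-θ))) := by
    intro m
    have hc : (0 : ℝ) < ((m : ℝ) + 1)⁻¹ := by positivity
    have hct : Tendsto (fun t : ℝ => ((m : ℝ) + 1)⁻¹ * t) atTop atTop :=
      tendsto_id.const_mul_atTop hc
    have h := (Real.continuous_exp.tendsto _).comp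
      ((tendsto_expRecipSum_mul_sub hdens hc).add ((hDlim.comp hct).sub hDlim))
    have hlim : Real.exp (θ * Real.log ((m : ℝ) + 1)⁻¹ + (-(Real.eulerMascheroniConstant * θ) + E₀ -
        (-(Real.eulerMascheroniConstant * θ) + E₀))) = ((m : ℝ) + 1) ^ (-θ) := by
      rw [Real.rpow_def_of_pos (by positivity), Real.log_inv]
      congr 1
      ring
    rw [hlim] at h
    refine h.congr' ?_
    filter_upwards [eventually_gt_atTop 0] with t ht
    have e : ((m : ℝ) + 1) / t = 1 / (((m : ℝ) + 1)⁻¹ * t) := by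
      field_simp
    rw [e]
    change _ = F (((m : ℝ) + 1)⁻¹ * t) / F t
    rw [hFexp _ (by positivity), hFexp t ht, ← Real.exp_sub]
    simp only [Function.comp]
    congr 1
    ring
  have hkar := tendsto_sum_div_of_regularlyVarying (phiWeight_nonneg k A)
    (by rw [phiWeight_one (by omega)]; exact one_pos) hθ.1
    (fun s hs => by
      simpa using (summable_and_tsum_phiWeight_mul_rpow hk hA (inv_pos.2 hs)).1) hreg
  have hlog : Tendsto (fun N : ℕ => Real.log N) atTop atTop :=
    Real.tendsto_log_atTop.comp tendsto_natCast_atTop_atTop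
  have hsumE : Summable (eulerError k A 0) :=
    Summable.of_norm_bounded summable_two_div_sq (norm_eulerError_le hk hA le_rfl)
  have hE : Tendsto (fun N : ℕ => ∑ p ∈ Finset.Ioc 0 N, eulerError k A 0 p) atTop (nhds E₀) :=
    tendsto_sum_Ioc_of_summable hsumE
      (Set.indicator_of_notMem (fun h => Nat.not_prime_zero (hA 0 h)) _)
  have hPF := (Real.continuous_exp.tendsto _).comp (hE.sub (hDlim.comp hlog))
  have hG : 0 < Real.Gamma (θ + 1) := Real.Gamma_pos_of_pos (by linarith [hθ.1])
  have hfinal := hPF.div (hkar.comp hlog) (by positivity)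
  have hlim : Real.exp (E₀ - (-(Real.eulerMascheroniConstant * θ) + E₀)) /
      (1 / Real.Gamma (θ + 1)) =
        Real.exp (Real.eulerMascheroniConstant * θ) * Real.Gamma (θ + 1) := by
    rw [div_div_eq_mul_div, div_one]
    congr 2
    ring
  rw [hlim] at hfinal
  refine hfinal.congr' ?_
  filter_upwards [eventually_ge_atTop 2] with N hN
  have hN' : (1 : ℝ) < N := by exact_mod_cast hN
  have hfl : ⌊Real.exp (Real.log N)⌋₊ = N := by
    rw [Real.exp_log (by linarith), Nat.floor_natCast]
  have hFN := hFexp _ (Real.log_pos hN')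
  have hFne : F (Real.log N) ≠ 0 := by
    rw [hFN]
    exact (Real.exp_pos _).ne'
  simp only [Function.comp, Pi.div_apply, hfl]
  rw [div_div_eq_mul_div]
  change _ * F (Real.log N) / (∑ n ∈ Finset.Ioc 0 N, phiWeight k A n) =
    _ / ∑ n ∈ Finset.Icc 1 N, phiWeight k A n
  have hicc : Finset.Ioc 0 N = Finset.Icc 1 N := rfl
  rw [hFN, ← Real.exp_add, harmSum_eq_exp hk A hA, expRecipSum, hfl, hicc]
  congr 2
  ring
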